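/- Assume h convex, the control condition |d·h'(c·d)| ≤ K(h(d)+1) for |c−1| ≤ γ₀, and that t = 1 is the unique positive solution of Φ̂_{,1}(t,…,t) = 0. Fix ε ∈ (0,1). Then the punctured-ball functional Î_ε has a unique global minimizer r_ε over 𝒜_λ^ε. Moreover, there exists δ(ε) > 0 such that if λ > 1 − δ(ε), then r_ε ∈ C²([ε,1]), r_ε solves the modified equilibrium equation (d/dR)[R^{n−1} Φ̂_{,1}(r(R))] = (n−1) R^{n−2} Φ̂_{,2}(r(R)) on (ε,1), r_ε'(R) > 0 for all R ∈ [ε,1], r_ε(ε) > 0, and T̂(r_ε(ε)) = 0. -/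

import Mathlib

open Real MeasureTheory Filter Set
open scoped ENNReal NNReal

noncomputable section

/-- Radial stored energy `Φ(q, v, …, v) = (κ/n)(qⁿ + (n−1)vⁿ) + h(q v^{n−1})`,
the restriction of `Φ(v₁,…,vₙ) = (κ/n)(v₁ⁿ+⋯+vₙⁿ) + h(v₁⋯vₙ)` to points
`(q, v, …, v)`. -/
def Phi (n : ℕ) (κ : ℝ) (h : ℝ → ℝ) (q v : ℝ) : ℝ :=
  (κ / n) * (q ^ n + ((n : ℝ) - 1) * v ^ n) + h (q * v ^ (n - 1))

/-- `Φ_{,1}(q, v, …, v) = κ q^{n−1} + v^{n−1} h'(q v^{n−1})`. -/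
def Phi1 (n : ℕ) (κ : ℝ) (h' : ℝ → ℝ) (q v : ℝ) : ℝ :=
  κ * q ^ (n - 1) + v ^ (n - 1) * h' (q * v ^ (n - 1))

/-- `Φ_{,2}(q, v, …, v) = κ v^{n−1} + q v^{n−2} h'(q v^{n−1})`. -/
def Phi2 (n : ℕ) (κ : ℝ) (h' : ℝ → ℝ) (q v : ℝ) : ℝ :=
  κ * v ^ (n - 1) + q * v ^ (n - 2) * h' (q * v ^ (n - 1))

/-- Radial Cauchy stress `T(q,v) = v^{1−n} Φ_{,1}(q,v,…,v) = κ(q/v)^{n−1} + h'(q v^{n−1})`. -/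
def Tstress (n : ℕ) (κ : ℝ) (h' : ℝ → ℝ) (q v : ℝ) : ℝ :=
  κ * (q / v) ^ (n - 1) + h' (q * v ^ (n - 1))

/-- The determinant function `δ(R) = r'(R) (r(R)/R)^{n−1}`. -/
def del (n : ℕ) (r r' : ℝ → ℝ) (R : ℝ) : ℝ :=
  r' R * (r R / R) ^ (n - 1)

/-- Hypotheses on `h : (0,∞) → [0,∞)`: it is `C²` with derivative `h'` and second
derivative `h''`, `h'' > 0`, `h(d) → ∞` as `d → 0⁺`, `h(d)/d → ∞` as `d → ∞`,
`h'(d) → −∞` as `d → 0⁺` and `h'(d) → ∞` as `d → ∞`. -/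
structure GoodH (h h' h'' : ℝ → ℝ) : Prop where
  nonneg : ∀ d : ℝ, 0 < d → 0 ≤ h d
  deriv1 : ∀ d : ℝ, 0 < d → HasDerivAt h (h' d) d
  deriv2 : ∀ d : ℝ, 0 < d → HasDerivAt h' (h'' d) d
  cont2 : ContinuousOn h'' (Set.Ioi 0)
  hpp_pos : ∀ d : ℝ, 0 < d → 0 < h'' d
  lim_zero : Tendsto h (nhdsWithin 0 (Set.Ioi 0)) atTop
  lim_growth : Tendsto (fun d => h d / d) atTop atTop
  dlim_zero : Tendsto h' (nhdsWithin 0 (Set.Ioi 0)) atBot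
  dlim_top : Tendsto h' atTop atTop

/-- `r ∈ C²((0,1])`, with `r, r' > 0` on `(0,1]`, solving the radial equilibrium
equation `(d/dR)[R^{n−1} Φ_{,1}(r(R))] = (n−1) R^{n−2} Φ_{,2}(r(R))`. -/
structure RadialSol (n : ℕ) (κ : ℝ) (h' : ℝ → ℝ) (r r' r'' : ℝ → ℝ) : Prop where
  pos : ∀ R ∈ Set.Ioc (0:ℝ) 1, 0 < r R
  derivPos : ∀ R ∈ Set.Ioc (0:ℝ) 1, 0 < r' R
  hasDeriv : ∀ R ∈ Set.Ioc (0:ℝ) 1, HasDerivWithinAt r (r' R) (Set.Ioc 0 1) R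
  hasDeriv2 : ∀ R ∈ Set.Ioc (0:ℝ) 1, HasDerivWithinAt r' (r'' R) (Set.Ioc 0 1) R
  cont2 : ContinuousOn r'' (Set.Ioc 0 1)
  equil : ∀ R ∈ Set.Ioc (0:ℝ) 1,
    HasDerivWithinAt (fun s => s ^ (n - 1) * Phi1 n κ h' (r' s) (r s / s))
      (((n : ℝ) - 1) * R ^ (n - 2) * Phi2 n κ h' (r' R) (r R / R)) (Set.Ioc 0 1) R


/-- Modified radial stored energy
`Φ̂(q,v,…,v) = (κ/n)qⁿ + h(q v^{n−1}) + κ q v^{n−1}((n−1)/n + ln(v^{n−1}))`. -/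
def PhiHat (n : ℕ) (κ : ℝ) (h : ℝ → ℝ) (q v : ℝ) : ℝ :=
  (κ / n) * q ^ n + h (q * v ^ (n - 1)) +
    κ * (q * v ^ (n - 1)) * (((n : ℝ) - 1) / n + ((n : ℝ) - 1) * Real.log v)

/-- `Φ̂_{,1}(q,v,…,v) = κ q^{n−1} + v^{n−1} h'(q v^{n−1}) + κ v^{n−1}((n−1)/n + (n−1) ln v)`. -/
def PhiHat1 (n : ℕ) (κ : ℝ) (h' : ℝ → ℝ) (q v : ℝ) : ℝ :=
  κ * q ^ (n - 1) + v ^ (n - 1) * h' (q * v ^ (n - 1)) +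
    κ * v ^ (n - 1) * (((n : ℝ) - 1) / n + ((n : ℝ) - 1) * Real.log v)

/-- `Φ̂_{,2}(q,v,…,v) = q v^{n−2}(h'(q v^{n−1}) + κ + κ(n−1)(1/n + ln v))`. -/
def PhiHat2 (n : ℕ) (κ : ℝ) (h' : ℝ → ℝ) (q v : ℝ) : ℝ :=
  q * v ^ (n - 2) *
    (h' (q * v ^ (n - 1)) + κ + κ * (((n : ℝ) - 1) * (1 / n + Real.log v)))

/-- Modified radial Cauchy stress
`T̂(q,v) = κ(q/v)^{n−1} + h'(q v^{n−1}) + (n−1)κ(1/n + ln v)`. -/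
def THat (n : ℕ) (κ : ℝ) (h' : ℝ → ℝ) (q v : ℝ) : ℝ :=
  κ * (q / v) ^ (n - 1) + h' (q * v ^ (n - 1)) +
    ((n : ℝ) - 1) * κ * (1 / n + Real.log v)

/-- `r ∈ C²((0,1])`, with `r, r' > 0` on `(0,1]`, solving the modified radial
equilibrium equation `(d/dR)[R^{n−1} Φ̂_{,1}(r(R))] = (n−1) R^{n−2} Φ̂_{,2}(r(R))`. -/
structure ModRadialSol (n : ℕ) (κ : ℝ) (h' : ℝ → ℝ) (r r' r'' : ℝ → ℝ) : Prop where
  pos : ∀ R ∈ Set.Ioc (0:ℝ) 1, 0 < r R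
  derivPos : ∀ R ∈ Set.Ioc (0:ℝ) 1, 0 < r' R
  hasDeriv : ∀ R ∈ Set.Ioc (0:ℝ) 1, HasDerivWithinAt r (r' R) (Set.Ioc 0 1) R
  hasDeriv2 : ∀ R ∈ Set.Ioc (0:ℝ) 1, HasDerivWithinAt r' (r'' R) (Set.Ioc 0 1) R
  cont2 : ContinuousOn r'' (Set.Ioc 0 1)
  equil : ∀ R ∈ Set.Ioc (0:ℝ) 1,
    HasDerivWithinAt (fun s => s ^ (n - 1) * PhiHat1 n κ h' (r' s) (r s / s))
      (((n : ℝ) - 1) * R ^ (n - 2) * PhiHat2 n κ h' (r' R) (r R / R)) (Set.Ioc 0 1) R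


/-- The admissible set `𝒜_λ^ε` over the punctured ball: `r ∈ W^{1,1}(ε,1)`,
`r(1) = λ`, `r' > 0` a.e. in `(ε,1)` and `r(ε) ≥ 0`. -/
structure AdmE (ε lam : ℝ) (r r' : ℝ → ℝ) : Prop where
  intg : IntegrableOn r' (Set.Ioc ε 1)
  ftc : ∀ R ∈ Set.Icc ε 1, r R = r ε + ∫ t in Set.Ioc ε R, r' t
  derivPos : ∀ᵐ R ∂(volume.restrict (Set.Ioc ε 1)), 0 < r' R
  bc : r 1 = lam
  c0 : 0 ≤ r ε

/-- The punctured-ball modified energy functional `Î_ε`, valued in `EReal`. -/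
def IHatEps (n : ℕ) (κ ε lam : ℝ) (h : ℝ → ℝ) (r r' : ℝ → ℝ) : EReal :=
  (((∫⁻ R in Set.Ioc ε 1,
      ENNReal.ofReal (R ^ (n - 1) * PhiHat n κ h (r' R) (r R / R))) : ℝ≥0∞) : EReal)
  - (((∫⁻ R in Set.Ioc ε 1,
      ENNReal.ofReal (-(R ^ (n - 1) * PhiHat n κ h (r' R) (r R / R)))) : ℝ≥0∞) : EReal)
  - ((κ * ((n : ℝ) - 1) / n * lam ^ n * Real.log lam : ℝ) : EReal)

/-!
Along the calibration attached to a solution `U` of the equilibrium equation, the excess energy of a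
competitor splits as a nonnegative Weierstrass excess, zero only where the determinants agree, plus
a boundary term at `ε`. Writing `b = r(ε)ⁿ`, this says that the least energy at inner radius
`b^(1/n)` is a convex function of `b` plus an explicit concave function, and that its derivative in
`b` is `-T̂/n` evaluated at the inner boundary of the extremal. In the variable `s = log R - log ε`
the equilibrium equation is a planar autonomous system, so extremals are obtained by shooting, and a
comparison of trajectories shows that with the outer radius fixed `T̂` at the inner boundary is
positive below one value of `b` and negative above it. That value gives the unique minimizer.
-/

section Stress

/-- The part `κ pⁿ⁻¹ + h'(p eⁿʷ)` of the modified Cauchy stress that increases in the stretch ratio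
`p = R r'/r`, in the logarithmic coordinate `w = ln (r/R)`. -/
def stressC (n : ℕ) (κ : ℝ) (h' : ℝ → ℝ) (p w : ℝ) : ℝ :=
  κ * p ^ (n - 1) + h' (p * exp (n * w))

/-- The partial derivative of `stressC` in `p`. -/
def stressDp (n : ℕ) (κ : ℝ) (h'' : ℝ → ℝ) (p w : ℝ) : ℝ :=
  κ * (((n - 1 : ℕ) : ℝ) * p ^ (n - 1 - 1)) + h'' (p * exp (n * w)) * exp (n * w)

/-- The partial derivative of `stressC` in `w`. -/
def stressDw (n : ℕ) (h'' : ℝ → ℝ) (p w : ℝ) : ℝ :=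
  h'' (p * exp (n * w)) * (p * (exp (n * w) * n))

/-- The stretch ratio `p > 0` carrying the stress `z.1` at `w = z.2`, that is, the inverse of
`stressC` in its first variable. -/
def stretch (n : ℕ) (κ : ℝ) (h' : ℝ → ℝ) (z : ℝ × ℝ) : ℝ :=
  Function.invFunOn (fun p => stressC n κ h' p z.2) (Ioi 0) z.1

variable {n : ℕ} {κ : ℝ} {h h' h'' : ℝ → ℝ}

lemma GoodH.deriv_strictMonoOn (hh : GoodH h h' h'') : StrictMonoOn h' (Ioi 0) :=
  strictMonoOn_of_hasDerivWithinAt_pos (convex_Ioi 0)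
    (fun x hx => (hh.deriv2 x hx).continuousAt.continuousWithinAt)
    (fun x hx => (hh.deriv2 x (interior_subset hx)).hasDerivWithinAt)
    fun x hx => hh.hpp_pos x (interior_subset hx)

lemma GoodH.continuousOn_deriv (hh : GoodH h h' h'') : ContinuousOn h' (Ioi 0) :=
  fun x hx => (hh.deriv2 x hx).continuousAt.continuousWithinAt

lemma stressC_le_stressC (hκ : 0 < κ) (hh : GoodH h h' h'') {p₁ p₂ w₁ w₂ : ℝ} (h₁ : 0 < p₁)
    (hp : p₁ ≤ p₂) (hw : w₁ ≤ w₂) : stressC n κ h' p₁ w₁ ≤ stressC n κ h' p₂ w₂ := by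
  have h₂ : 0 < p₂ := h₁.trans_le hp
  exact add_le_add (by gcongr) (hh.deriv_strictMonoOn.monotoneOn (mem_Ioi.2 (by positivity))
    (mem_Ioi.2 (by positivity)) (by gcongr))

lemma stressC_lt_stressC (hκ : 0 < κ) (hh : GoodH h h' h'') {p₁ p₂ w₁ w₂ : ℝ} (h₁ : 0 < p₁)
    (hp : p₁ < p₂) (hw : w₁ ≤ w₂) : stressC n κ h' p₁ w₁ < stressC n κ h' p₂ w₂ := by
  have h₂ : 0 < p₂ := h₁.trans hp
  refine add_lt_add_of_le_of_lt (by gcongr) (hh.deriv_strictMonoOn (mem_Ioi.2 (by positivity))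
    (mem_Ioi.2 (by positivity)) ?_)
  calc p₁ * exp (n * w₁) < p₂ * exp (n * w₁) := by gcongr
    _ ≤ p₂ * exp (n * w₂) := by gcongr

lemma lt_of_stressC_lt (hκ : 0 < κ) (hh : GoodH h h' h'') {p₁ p₂ w : ℝ} (h₂ : 0 < p₂)
    (hlt : stressC n κ h' p₁ w < stressC n κ h' p₂ w) : p₁ < p₂ := by
  by_contra! hc
  exact absurd (stressC_le_stressC hκ hh h₂ hc le_rfl) (not_le.2 hlt)

lemma stressDp_pos (hκ : 0 < κ) (hh : GoodH h h' h'') {p : ℝ} (hp : 0 < p) (w : ℝ) :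
    0 < stressDp n κ h'' p w := by
  have := hh.hpp_pos (p * exp (n * w)) (by positivity)
  unfold stressDp
  positivity

lemma stressDw_nonneg (hh : GoodH h h' h'') {p : ℝ} (hp : 0 < p) (w : ℝ) :
    0 ≤ stressDw n h'' p w := by
  have := hh.hpp_pos (p * exp (n * w)) (by positivity)
  unfold stressDw
  positivity

lemma hasFDerivAt_stressC (hh : GoodH h h' h'') {p : ℝ} (hp : 0 < p) (w : ℝ) :
    HasFDerivAt (fun z : ℝ × ℝ => stressC n κ h' z.1 z.2)
      (stressDp n κ h'' p w • ContinuousLinearMap.fst ℝ ℝ ℝ +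
        stressDw n h'' p w • ContinuousLinearMap.snd ℝ ℝ ℝ) (p, w) := by
  have hd : HasFDerivAt (fun z : ℝ × ℝ => z.1 * exp (n * z.2)) _ (p, w) :=
    hasFDerivAt_fst.mul (hasFDerivAt_snd.const_mul (n : ℝ)).exp
  refine (((hasFDerivAt_fst.pow (n - 1)).const_mul κ).add
    ((hh.deriv2 (p * exp (n * w)) (by positivity)).comp_hasFDerivAt (p, w) hd)).congr_fderiv ?_
  ext <;> simp [stressDp, stressDw]

lemma continuousAt_stressC (hh : GoodH h h' h'') {p : ℝ} (hp : 0 < p) (w : ℝ) :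
    ContinuousAt (fun z : ℝ × ℝ => stressC n κ h' z.1 z.2) (p, w) :=
  (hasFDerivAt_stressC hh hp w).continuousAt

lemma exists_stressC_le (hκ : 0 < κ) (hh : GoodH h h' h'') (q w : ℝ) :
    ∃ p, 0 < p ∧ stressC n κ h' p w ≤ q := by
  have hlim : Tendsto (fun p : ℝ => p * exp (n * w)) (nhdsWithin 0 (Ioi 0))
      (nhdsWithin 0 (Ioi 0)) := by
    refine tendsto_nhdsWithin_iff.2 ⟨?_, ?_⟩
    · have : Tendsto (fun p : ℝ => p * exp (n * w)) (nhds 0) (nhds (0 * exp (n * w))) :=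
        tendsto_id.mul_const _
      rw [zero_mul] at this
      exact this.mono_left nhdsWithin_le_nhds
    · filter_upwards [self_mem_nhdsWithin] with p hp using mul_pos hp (exp_pos _)
  obtain ⟨p, hle, hp⟩ := (((hh.dlim_zero.comp hlim).eventually (eventually_le_atBot (q - κ))).and
    (Ioc_mem_nhdsGT one_pos)).exists
  have hpow : κ * p ^ (n - 1) ≤ κ := mul_le_of_le_one_right hκ.le (pow_le_one₀ hp.1.le hp.2)
  simp only [Function.comp_apply] at hle
  exact ⟨p, hp.1, by unfold stressC; linarith⟩

lemma exists_le_stressC (hκ : 0 < κ) (hh : GoodH h h' h'') (q w : ℝ) :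
    ∃ p, 0 < p ∧ q ≤ stressC n κ h' p w := by
  have hlim : Tendsto (fun p : ℝ => p * exp (n * w)) atTop atTop :=
    tendsto_id.atTop_mul_const (exp_pos _)
  obtain ⟨p, hle, hp⟩ := (((hh.dlim_top.comp hlim).eventually (eventually_ge_atTop q)).and
    (eventually_gt_atTop 0)).exists
  have hpow : 0 ≤ κ * p ^ (n - 1) := by positivity
  simp only [Function.comp_apply] at hle
  exact ⟨p, hp, by unfold stressC; linarith⟩

lemma exists_stressC_eq (hκ : 0 < κ) (hh : GoodH h h' h'') (q w : ℝ) :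
    ∃ p ∈ Ioi 0, stressC n κ h' p w = q := by
  obtain ⟨p₁, hp₁, hq₁⟩ := exists_stressC_le (n := n) hκ hh q w
  obtain ⟨p₂, hp₂, hq₂⟩ := exists_le_stressC (n := n) hκ hh q w
  have hcont : ContinuousOn (fun p => stressC n κ h' p w) (Ioi 0) := fun p hp =>
    (ContinuousAt.comp (f := fun p : ℝ => (p, w)) (continuousAt_stressC hh hp w)
      (by fun_prop)).continuousWithinAt
  exact isPreconnected_Ioi.intermediate_value (mem_Ioi.2 hp₁) (mem_Ioi.2 hp₂) hcont ⟨hq₁, hq₂⟩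

lemma stretch_pos (hκ : 0 < κ) (hh : GoodH h h' h'') (z : ℝ × ℝ) : 0 < stretch n κ h' z :=
  Function.invFunOn_mem (exists_stressC_eq hκ hh z.1 z.2)

lemma stressC_stretch (hκ : 0 < κ) (hh : GoodH h h' h'') (z : ℝ × ℝ) :
    stressC n κ h' (stretch n κ h' z) z.2 = z.1 :=
  Function.invFunOn_eq (exists_stressC_eq hκ hh z.1 z.2)

lemma stretch_stressC (hκ : 0 < κ) (hh : GoodH h h' h'') {p : ℝ} (hp : 0 < p) (w : ℝ) :
    stretch n κ h' (stressC n κ h' p w, w) = p := by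
  have heq := stressC_stretch (n := n) hκ hh (stressC n κ h' p w, w)
  have hmono : StrictMonoOn (fun p => stressC n κ h' p w) (Ioi 0) := fun _ hx _ _ hlt =>
    stressC_lt_stressC hκ hh hx hlt le_rfl
  exact hmono.injOn (stretch_pos hκ hh _) hp heq

lemma continuous_stretch (hκ : 0 < κ) (hh : GoodH h h' h'') :
    Continuous (stretch n κ h') := by
  refine continuous_iff_continuousAt.2 fun z => tendsto_order.2 ⟨fun c hc => ?_, fun c hc => ?_⟩
  · rcases le_or_gt c 0 with h0 | h0
    · exact Eventually.of_forall fun y => h0.trans_lt (stretch_pos hκ hh y)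
    have hlt : stressC n κ h' c z.2 < z.1 :=
      (stressC_lt_stressC hκ hh h0 hc le_rfl).trans_eq (stressC_stretch hκ hh z)
    have hcont : ContinuousAt (fun y : ℝ × ℝ => stressC n κ h' c y.2) z :=
      ContinuousAt.comp (f := fun y : ℝ × ℝ => (c, y.2)) (continuousAt_stressC hh h0 z.2)
        (by fun_prop)
    filter_upwards [hcont.eventually_lt continuousAt_fst hlt] with y hy
    exact lt_of_stressC_lt hκ hh (stretch_pos hκ hh y) (hy.trans_eq (stressC_stretch hκ hh y).symm)
  · have h0 : 0 < c := (stretch_pos hκ hh z).trans hc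
    have hlt : z.1 < stressC n κ h' c z.2 :=
      (stressC_stretch hκ hh z).symm.trans_lt
        (stressC_lt_stressC hκ hh (stretch_pos hκ hh z) hc le_rfl)
    have hcont : ContinuousAt (fun y : ℝ × ℝ => stressC n κ h' c y.2) z :=
      ContinuousAt.comp (f := fun y : ℝ × ℝ => (c, y.2)) (continuousAt_stressC hh h0 z.2)
        (by fun_prop)
    filter_upwards [continuousAt_fst.eventually_lt hcont hlt] with y hy
    exact lt_of_stressC_lt hκ hh h0 ((stressC_stretch hκ hh y).trans_lt hy)

/-- The shear `(x, y) ↦ (a x + b y, y)` of the plane. -/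
def shearEquiv (a b : ℝ) (ha : a ≠ 0) : (ℝ × ℝ) ≃L[ℝ] ℝ × ℝ :=
  ContinuousLinearEquiv.equivOfInverse
    ((a • ContinuousLinearMap.fst ℝ ℝ ℝ + b • ContinuousLinearMap.snd ℝ ℝ ℝ).prod
      (ContinuousLinearMap.snd ℝ ℝ ℝ))
    ((a⁻¹ • (ContinuousLinearMap.fst ℝ ℝ ℝ - b • ContinuousLinearMap.snd ℝ ℝ ℝ)).prod
      (ContinuousLinearMap.snd ℝ ℝ ℝ))
    (fun z => by ext <;> simp [ha]) (fun z => by ext <;> simp [ha])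

lemma hasFDerivAt_stretch (hκ : 0 < κ) (hh : GoodH h h' h'') (z : ℝ × ℝ) :
    HasFDerivAt (stretch n κ h')
      ((stressDp n κ h'' (stretch n κ h' z) z.2)⁻¹ • (ContinuousLinearMap.fst ℝ ℝ ℝ -
        stressDw n h'' (stretch n κ h' z) z.2 • ContinuousLinearMap.snd ℝ ℝ ℝ)) z := by
  have hp := stretch_pos (n := n) hκ hh z
  have hinv := HasFDerivAt.of_local_left_inverse (g := fun y => (stretch n κ h' y, y.2)) (a := z)
    (f := fun y : ℝ × ℝ => (stressC n κ h' y.1 y.2, y.2))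
    (f' := shearEquiv _ (stressDw n h'' (stretch n κ h' z) z.2) (stressDp_pos hκ hh hp z.2).ne')
    ((continuous_stretch hκ hh).prodMk continuous_snd).continuousAt
    ((hasFDerivAt_stressC hh hp z.2).prodMk hasFDerivAt_snd)
    (Eventually.of_forall fun y => Prod.ext (stressC_stretch hκ hh y) rfl)
  exact hinv.fst

lemma continuousOn_hess_comp {α : Type*} [TopologicalSpace α] {s : Set α} {p w : α → ℝ}
    (hh : GoodH h h' h'') (hp : ContinuousOn p s) (hw : ContinuousOn w s)
    (hpos : ∀ x ∈ s, 0 < p x) :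
    ContinuousOn (fun x => h'' (p x * exp (n * w x))) s :=
  hh.cont2.comp (by fun_prop) fun x hx => mul_pos (hpos x hx) (exp_pos _)

lemma continuousOn_stressDp {α : Type*} [TopologicalSpace α] {s : Set α} {p w : α → ℝ}
    (hh : GoodH h h' h'') (hp : ContinuousOn p s) (hw : ContinuousOn w s)
    (hpos : ∀ x ∈ s, 0 < p x) : ContinuousOn (fun x => stressDp n κ h'' (p x) (w x)) s := by
  have hexp : ContinuousOn (fun x => exp (n * w x)) s := by fun_prop
  exact (continuousOn_const.mul (continuousOn_const.mul (hp.pow _))).add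
    ((continuousOn_hess_comp hh hp hw hpos).mul hexp)

lemma continuousOn_stressDw {α : Type*} [TopologicalSpace α] {s : Set α} {p w : α → ℝ}
    (hh : GoodH h h' h'') (hp : ContinuousOn p s) (hw : ContinuousOn w s)
    (hpos : ∀ x ∈ s, 0 < p x) : ContinuousOn (fun x => stressDw n h'' (p x) (w x)) s := by
  have hexp : ContinuousOn (fun x => exp (n * w x)) s := by fun_prop
  exact (continuousOn_hess_comp hh hp hw hpos).mul (hp.mul (hexp.mul continuousOn_const))

lemma contDiff_stretch (hκ : 0 < κ) (hh : GoodH h h' h'') : ContDiff ℝ 1 (stretch n κ h') := by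
  refine contDiff_one_iff_hasFDerivAt.2 ⟨_, ?_, hasFDerivAt_stretch hκ hh⟩
  have hpos : ∀ z ∈ univ, 0 < stretch n κ h' z := fun z _ => stretch_pos hκ hh z
  have hc := (continuous_stretch (n := n) hκ hh).continuousOn (s := univ)
  have hDp := continuousOn_univ.1
    (continuousOn_stressDp (n := n) (κ := κ) hh hc continuousOn_snd hpos)
  have hDw := continuousOn_univ.1 (continuousOn_stressDw (n := n) hh hc continuousOn_snd hpos)
  exact (hDp.inv₀ fun z => (stressDp_pos hκ hh (stretch_pos hκ hh z) z.2).ne').smul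
    (continuous_const.sub (hDw.smul continuous_const))

end Stress

section Ode

lemma monotoneOn_Icc_of_hasDerivWithinAt {f f' : ℝ → ℝ} {a b : ℝ}
    (hf : ∀ s ∈ Icc a b, HasDerivWithinAt f (f' s) (Icc a b) s)
    (hnn : ∀ s ∈ Icc a b, 0 ≤ f' s) : MonotoneOn f (Icc a b) :=
  monotoneOn_of_hasDerivWithinAt_nonneg (convex_Icc a b)
    (fun s hs => (hf s hs).continuousWithinAt)
    (fun s hs => (hf s (interior_subset hs)).mono interior_subset)
    (fun s hs => hnn s (interior_subset hs))

lemma strictMonoOn_Icc_of_hasDerivWithinAt {f f' : ℝ → ℝ} {a b : ℝ}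
    (hf : ∀ s ∈ Icc a b, HasDerivWithinAt f (f' s) (Icc a b) s)
    (hpos : ∀ s ∈ Icc a b, 0 < f' s) : StrictMonoOn f (Icc a b) :=
  strictMonoOn_of_hasDerivWithinAt_pos (convex_Icc a b)
    (fun s hs => (hf s hs).continuousWithinAt)
    (fun s hs => (hf s (interior_subset hs)).mono interior_subset)
    (fun s hs => hpos s (interior_subset hs))

lemma abs_le_abs_of_mul_deriv_nonpos {f f' : ℝ → ℝ} {a b : ℝ}
    (hf : ∀ s ∈ Icc a b, HasDerivWithinAt f (f' s) (Icc a b) s)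
    (hle : ∀ s ∈ Icc a b, f s * f' s ≤ 0) : ∀ s ∈ Icc a b, |f s| ≤ |f a| := by
  intro s hs
  have hmono : MonotoneOn (fun s => -(f s ^ 2)) (Icc a b) :=
    monotoneOn_Icc_of_hasDerivWithinAt (fun s hs => ((hf s hs).pow 2).neg)
      fun s hs => by simp only [Nat.cast_ofNat, Nat.add_one_sub_one, pow_one]; linarith [hle s hs]
  have hsq := hmono ⟨le_rfl, hs.1.trans hs.2⟩ hs hs.1
  exact sq_le_sq.1 (neg_le_neg_iff.1 hsq)

lemma exists_pos_eq_mul_of_hasDerivWithinAt {f g : ℝ → ℝ} {a b : ℝ} (hg : ContinuousOn g (Icc a b))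
    (hf : ∀ s ∈ Icc a b, HasDerivWithinAt f (-(g s * f s)) (Icc a b) s) {s : ℝ}
    (hs : s ∈ Icc a b) : ∃ c, 0 < c ∧ f s = c * f a := by
  have hab : a ≤ b := hs.1.trans hs.2
  have hgc : Continuous (IccExtend hab ((Icc a b).domRestrict g)) := hg.domRestrict.Icc_extend'
  set G : ℝ → ℝ := fun s => ∫ x in a..s, IccExtend hab ((Icc a b).domRestrict g) x
  have hG : ∀ s ∈ Icc a b, HasDerivAt G (g s) s := fun s hs => by
    have := (hgc.integral_hasStrictDerivAt a s).hasDerivAt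
    rwa [IccExtend_of_mem hab _ hs] at this
  have hconst : ∀ s ∈ Icc a b, HasDerivWithinAt (fun s => exp (G s) * f s) 0 (Icc a b) s :=
    fun s hs => ((hG s hs).hasDerivWithinAt.exp.mul (hf s hs)).congr_deriv (by ring)
  have heq := (convex_Icc a b).norm_image_sub_le_of_norm_hasDerivWithin_le hconst
    (fun _ _ => norm_zero.le) ⟨le_rfl, hab⟩ hs
  rw [zero_mul, norm_le_zero_iff, sub_eq_zero] at heq
  have hGa : G a = 0 := intervalIntegral.integral_same
  rw [hGa, exp_zero, one_mul] at heq
  exact ⟨exp (-G s), exp_pos _, by rw [← heq, ← mul_assoc, ← exp_add, neg_add_cancel, exp_zero,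
    one_mul]⟩

lemma exists_hasDerivWithinAt_Icc_of_bounded {E : Type*} [NormedAddCommGroup E] [NormedSpace ℝ E]
    [CompleteSpace E] {F : E → E} {C : ℝ≥0} (hbd : ∀ x, ‖F x‖ ≤ C)
    (hlip : ∀ x r, ∃ K, LipschitzOnWith K F (Metric.closedBall x r)) (x₀ : E) {L : ℝ}
    (hL : 0 ≤ L) :
    ∃ α : ℝ → E, α 0 = x₀ ∧ ∀ t ∈ Icc 0 L, HasDerivWithinAt α (F (α t)) (Icc 0 L) t := by
  obtain ⟨K, hK⟩ := hlip x₀ (C * L.toNNReal : ℝ≥0)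
  have hPL : IsPicardLindelof (fun _ : ℝ => F) (⟨0, le_rfl, hL⟩ : Icc (0 : ℝ) L) x₀
      (C * L.toNNReal) 0 C K :=
    IsPicardLindelof.of_time_independent (fun x _ => hbd x) hK (by simp [hL])
  exact hPL.exists_eq_forall_mem_Icc_hasDerivWithinAt₀

end Ode

section Polar

/-- The vector field of the modified equilibrium equation at stretch ratio `p`, in the unknowns
`(q, w)`, where `q = stressC p w`, `w = ln (r/R)` and time is `s = ln (R/ε)`. -/
def polarField (n : ℕ) (κ p : ℝ) : ℝ × ℝ := (κ * ((n : ℝ) - 1) * (1 - p ^ n), p - 1)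

/-- The trajectory `z = (q, w)` on `[0, L]` solves the modified equilibrium equation. -/
def IsPolarSol (n : ℕ) (κ : ℝ) (h' : ℝ → ℝ) (L : ℝ) (z : ℝ → ℝ × ℝ) : Prop :=
  ∀ s ∈ Icc 0 L, HasDerivWithinAt z (polarField n κ (stretch n κ h' (z s))) (Icc 0 L) s

/-- The rate `g` in the law `p' = -g (t - 1)` of the stretch ratio along a curve with velocity
`polarField t`; it equals `(κ (n - 1) (tⁿ - 1) / (t - 1) + stressDw p w) / stressDp p w`. -/
def decayRate (n : ℕ) (κ : ℝ) (h'' : ℝ → ℝ) (t p w : ℝ) : ℝ :=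
  (κ * ((n : ℝ) - 1) * (∑ i ∈ Finset.range n, t ^ i) + stressDw n h'' p w) / stressDp n κ h'' p w

variable {n : ℕ} {κ L : ℝ} {h h' h'' : ℝ → ℝ} {z z₁ z₂ : ℝ → ℝ × ℝ}

lemma norm_polarField_le (hn : 2 ≤ n) (hκ : 0 < κ) {p b : ℝ} (hp : 0 ≤ p) (hb : p ≤ b) :
    ‖polarField n κ p‖ ≤ κ * ((n : ℝ) - 1) * (1 + b ^ n) + (1 + b) := by
  have hn' : (2 : ℝ) ≤ n := by exact_mod_cast hn
  have hc : 0 ≤ κ * ((n : ℝ) - 1) := mul_nonneg hκ.le (by linarith)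
  have hpow : p ^ n ≤ b ^ n := by gcongr
  have hpow0 : 0 ≤ p ^ n := by positivity
  have hfst : |κ * ((n : ℝ) - 1) * (1 - p ^ n)| ≤ κ * ((n : ℝ) - 1) * (1 + b ^ n) := by
    rw [abs_mul, abs_of_nonneg hc]
    exact mul_le_mul_of_nonneg_left (abs_le.2 ⟨by linarith, by linarith⟩) hc
  have hsnd : |p - 1| ≤ 1 + b := abs_le.2 ⟨by linarith, by linarith⟩
  refine max_le (hfst.trans (le_add_of_nonneg_right (by linarith)))
    (hsnd.trans (le_add_of_nonneg_left ((abs_nonneg _).trans hfst)))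

lemma decayRate_nonneg (hn : 2 ≤ n) (hκ : 0 < κ) (hh : GoodH h h' h'') {t p : ℝ} (ht : 0 ≤ t)
    (hp : 0 < p) (w : ℝ) : 0 ≤ decayRate n κ h'' t p w := by
  have hn' : (2 : ℝ) ≤ n := by exact_mod_cast hn
  have hc : 0 ≤ κ * ((n : ℝ) - 1) := mul_nonneg hκ.le (by linarith)
  have hw := stressDw_nonneg (n := n) hh hp w
  exact div_nonneg (by positivity) (stressDp_pos hκ hh hp w).le

lemma hasDerivWithinAt_stretch (hκ : 0 < κ) (hh : GoodH h h' h'') {t s : ℝ} {A : Set ℝ}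
    (hz : HasDerivWithinAt z (polarField n κ t) A s) :
    HasDerivWithinAt (fun s => stretch n κ h' (z s))
      (-(decayRate n κ h'' t (stretch n κ h' (z s)) (z s).2 * (t - 1))) A s := by
  refine ((hasFDerivAt_stretch hκ hh (z s)).comp_hasDerivWithinAt s hz).congr_deriv ?_
  have hDp := (stressDp_pos (n := n) hκ hh (stretch_pos (n := n) hκ hh (z s)) (z s).2).ne'
  simp only [polarField, decayRate, smul_apply, sub_apply,
    ContinuousLinearMap.coe_fst', ContinuousLinearMap.coe_snd', smul_eq_mul]
  field_simp
  linear_combination κ * ((n : ℝ) - 1) * geom_sum_mul t n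

lemma contDiff_polarField (n : ℕ) (κ : ℝ) : ContDiff ℝ 1 (polarField n κ) := by
  unfold polarField
  fun_prop

lemma abs_stretch_sub_one_le (hn : 2 ≤ n) (hκ : 0 < κ) (hh : GoodH h h' h'') {t : ℝ → ℝ}
    (hz : ∀ s ∈ Icc 0 L, HasDerivWithinAt z (polarField n κ (t s)) (Icc 0 L) s)
    (ht : ∀ s, 0 ≤ t s) (hsign : ∀ s, 0 ≤ (stretch n κ h' (z s) - 1) * (t s - 1)) :
    ∀ s ∈ Icc 0 L, |stretch n κ h' (z s) - 1| ≤ |stretch n κ h' (z 0) - 1| := by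
  refine abs_le_abs_of_mul_deriv_nonpos (f := fun s => stretch n κ h' (z s) - 1)
    (fun s hs => (hasDerivWithinAt_stretch hκ hh (hz s hs)).sub_const 1) fun s _ => ?_
  have hrate := decayRate_nonneg hn hκ hh (ht s) (stretch_pos (n := n) hκ hh (z s)) (z s).2
  nlinarith [mul_nonneg hrate (hsign s)]

/-- The field is made bounded by truncating the stretch ratio from above; truncation does not
affect the sign of `p - 1`, so `|p - 1|` still decays and the truncation is never active. -/
lemma exists_isPolarSol (hn : 2 ≤ n) (hκ : 0 < κ) (hh : GoodH h h' h'') (hL : 0 ≤ L)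
    (z₀ : ℝ × ℝ) : ∃ z, IsPolarSol n κ h' L z ∧ z 0 = z₀ := by
  set b := 1 + |stretch n κ h' z₀ - 1|
  have hb : 1 ≤ b := le_add_of_nonneg_right (abs_nonneg _)
  have hmem : ∀ x, min b (stretch n κ h' x) ∈ Icc 0 b := fun x =>
    ⟨le_min (by linarith) (stretch_pos hκ hh x).le, min_le_left _ _⟩
  have hbd := fun x => norm_polarField_le hn hκ (hmem x).1 (hmem x).2
  have hlip : ∀ x r, ∃ K, LipschitzOnWith K
      (fun y => polarField n κ (min b (stretch n κ h' y))) (Metric.closedBall x r) := fun x r => by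
    obtain ⟨K, hK⟩ := (contDiff_stretch (n := n) hκ hh).contDiffOn.exists_lipschitzOnWith
      one_ne_zero (convex_closedBall x r) (isCompact_closedBall x r)
    obtain ⟨K', hK'⟩ := (contDiff_polarField n κ).contDiffOn.exists_lipschitzOnWith
      one_ne_zero (convex_Icc 0 b) isCompact_Icc
    exact ⟨_, hK'.comp ((LipschitzWith.id.const_min b).comp_lipschitzOnWith hK)
      fun y _ => hmem y⟩
  obtain ⟨z, hz0, hz⟩ := exists_hasDerivWithinAt_Icc_of_bounded
    (C := ⟨_, (norm_nonneg _).trans (hbd z₀)⟩) hbd hlip z₀ hL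
  have hsign : ∀ s, 0 ≤ (stretch n κ h' (z s) - 1) * (min b (stretch n κ h' (z s)) - 1) := by
    intro s
    rcases le_total 1 (stretch n κ h' (z s)) with h1 | h1
    · exact mul_nonneg (by linarith) (by linarith [le_min hb h1])
    · exact mul_nonneg_of_nonpos_of_nonpos (by linarith)
        (by linarith [min_le_right b (stretch n κ h' (z s))])
  refine ⟨z, fun s hs => ?_, hz0⟩
  have habs := abs_stretch_sub_one_le hn hκ hh hz (fun s => (hmem (z s)).1) hsign s hs
  rw [hz0] at habs
  have hp : stretch n κ h' (z s) ≤ b := by linarith [le_abs_self (stretch n κ h' (z s) - 1)]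
  have := hz s hs
  rwa [min_eq_right hp] at this

namespace IsPolarSol

lemma hasDeriv_fst (S : IsPolarSol n κ h' L z) {s : ℝ} (hs : s ∈ Icc 0 L) :
    HasDerivWithinAt (fun s => (z s).1) (κ * ((n : ℝ) - 1) * (1 - stretch n κ h' (z s) ^ n))
      (Icc 0 L) s :=
  (S s hs).fst

lemma hasDeriv_snd (S : IsPolarSol n κ h' L z) {s : ℝ} (hs : s ∈ Icc 0 L) :
    HasDerivWithinAt (fun s => (z s).2) (stretch n κ h' (z s) - 1) (Icc 0 L) s :=
  (S s hs).snd

lemma continuousOn (S : IsPolarSol n κ h' L z) : ContinuousOn z (Icc 0 L) :=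
  fun s hs => (S s hs).continuousWithinAt

lemma continuousOn_stretch (hκ : 0 < κ) (hh : GoodH h h' h'') (S : IsPolarSol n κ h' L z) :
    ContinuousOn (fun s => stretch n κ h' (z s)) (Icc 0 L) :=
  (continuous_stretch hκ hh).comp_continuousOn S.continuousOn

lemma continuousOn_decayRate (hκ : 0 < κ) (hh : GoodH h h' h'') (S : IsPolarSol n κ h' L z) :
    ContinuousOn (fun s =>
      decayRate n κ h'' (stretch n κ h' (z s)) (stretch n κ h' (z s)) (z s).2) (Icc 0 L) := by
  have hp := S.continuousOn_stretch hκ hh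
  have hw : ContinuousOn (fun s => (z s).2) (Icc 0 L) :=
    continuous_snd.comp_continuousOn S.continuousOn
  have hpos : ∀ s ∈ Icc 0 L, 0 < stretch n κ h' (z s) := fun s _ => stretch_pos hκ hh (z s)
  have hsum : ContinuousOn (fun s => ∑ i ∈ Finset.range n, stretch n κ h' (z s) ^ i) (Icc 0 L) :=
    continuousOn_finsetSum _ fun i _ => hp.pow i
  exact ((continuousOn_const.mul hsum).add (continuousOn_stressDw hh hp hw hpos)).div
    (continuousOn_stressDp hh hp hw hpos) fun s hs => (stressDp_pos hκ hh (hpos s hs) _).ne'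

lemma exists_pos_stretch_sub_one (hκ : 0 < κ) (hh : GoodH h h' h'') (S : IsPolarSol n κ h' L z)
    {s : ℝ} (hs : s ∈ Icc 0 L) :
    ∃ c, 0 < c ∧ stretch n κ h' (z s) - 1 = c * (stretch n κ h' (z 0) - 1) :=
  exists_pos_eq_mul_of_hasDerivWithinAt (f := fun s => stretch n κ h' (z s) - 1)
    (S.continuousOn_decayRate hκ hh)
    (fun s hs => (hasDerivWithinAt_stretch hκ hh (S s hs)).sub_const 1) hs

lemma one_lt_stretch_iff (hκ : 0 < κ) (hh : GoodH h h' h'') (S : IsPolarSol n κ h' L z)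
    {s : ℝ} (hs : s ∈ Icc 0 L) : 1 < stretch n κ h' (z s) ↔ 1 < stretch n κ h' (z 0) := by
  obtain ⟨c, hc, heq⟩ := S.exists_pos_stretch_sub_one hκ hh hs
  rw [← sub_pos, heq, mul_pos_iff_of_pos_left hc, sub_pos]

lemma stretch_lt_one_iff (hκ : 0 < κ) (hh : GoodH h h' h'') (S : IsPolarSol n κ h' L z)
    {s : ℝ} (hs : s ∈ Icc 0 L) : stretch n κ h' (z s) < 1 ↔ stretch n κ h' (z 0) < 1 := by
  obtain ⟨c, hc, heq⟩ := S.exists_pos_stretch_sub_one hκ hh hs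
  rw [← sub_neg, heq, ← neg_pos, ← mul_neg, mul_pos_iff_of_pos_left hc, neg_pos, sub_neg]

lemma shift (S : IsPolarSol n κ h' L z) {τ : ℝ} (hτ : 0 ≤ τ) :
    IsPolarSol n κ h' (L - τ) fun s => z (s + τ) := fun s hs => by
  have hmaps : MapsTo (fun s => s + τ) (Icc 0 (L - τ)) (Icc 0 L) := fun s hs =>
    ⟨add_nonneg hs.1 hτ, by linarith [hs.2]⟩
  have := (S _ (hmaps hs)).scomp s ((hasDerivWithinAt_id s (Icc 0 (L - τ))).add_const τ) hmaps
  rwa [one_smul] at this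

lemma restrict (S : IsPolarSol n κ h' L z) {L' : ℝ} (hL' : L' ≤ L) : IsPolarSol n κ h' L' z :=
  have hsub : Icc 0 L' ⊆ Icc 0 L := Icc_subset_Icc_right hL'
  fun s hs => (S s (hsub hs)).mono hsub

end IsPolarSol

end Polar

section Endpoint

variable {n : ℕ} {κ L : ℝ} {h h' h'' : ℝ → ℝ} {z z₁ z₂ : ℝ → ℝ × ℝ}

lemma exists_norm_isPolarSol_le (hn : 2 ≤ n) (hκ : 0 < κ) (hh : GoodH h h' h'') (L M : ℝ) :
    ∃ r, ∀ z, IsPolarSol n κ h' L z → ‖z 0‖ ≤ M → ∀ s ∈ Icc 0 L, ‖z s‖ ≤ r := by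
  have hcont : Continuous fun x => stretch n κ h' x - 1 :=
    (continuous_stretch hκ hh).sub continuous_const
  obtain ⟨B, hB⟩ :=
    (isCompact_closedBall (0 : ℝ × ℝ) M).exists_bound_of_continuousOn hcont.continuousOn
  set C := κ * ((n : ℝ) - 1) * (1 + (1 + B) ^ n) + (1 + (1 + B))
  refine ⟨M + C * L, fun z S hM s hs => ?_⟩
  have h0 : (0 : ℝ) ∈ Icc 0 L := ⟨le_rfl, hs.1.trans hs.2⟩
  have hspeed : ∀ t ∈ Icc 0 L, ‖polarField n κ (stretch n κ h' (z t))‖ ≤ C := fun t ht => by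
    have hdecay := abs_stretch_sub_one_le hn hκ hh S (fun _ => (stretch_pos hκ hh _).le)
      (fun _ => mul_self_nonneg _) t ht
    have hinit : |stretch n κ h' (z 0) - 1| ≤ B := hB _ (mem_closedBall_zero_iff.2 hM)
    exact norm_polarField_le hn hκ (stretch_pos hκ hh _).le
      (by linarith [le_abs_self (stretch n κ h' (z t) - 1)])
  have hC : 0 ≤ C := (norm_nonneg _).trans (hspeed 0 h0)
  have hmove := (convex_Icc 0 L).norm_image_sub_le_of_norm_hasDerivWithin_le S hspeed h0 hs
  rw [sub_zero, Real.norm_of_nonneg hs.1] at hmove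
  calc ‖z s‖ ≤ ‖z 0‖ + ‖z s - z 0‖ := norm_le_norm_add_norm_sub' _ _
    _ ≤ M + C * L := add_le_add hM (hmove.trans (by gcongr; exact hs.2))

lemma continuous_isPolarSol_endpoint (hn : 2 ≤ n) (hκ : 0 < κ) (hh : GoodH h h' h'') (hL : 0 ≤ L)
    {X : Type*} [TopologicalSpace X] {z : X → ℝ → ℝ × ℝ} (S : ∀ x, IsPolarSol n κ h' L (z x))
    (h0 : Continuous fun x => z x 0) : Continuous fun x => z x L := by
  refine continuous_iff_continuousAt.2 fun x => ?_
  obtain ⟨r, hr⟩ := exists_norm_isPolarSol_le hn hκ hh L (‖z x 0‖ + 1)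
  obtain ⟨K, hK⟩ := ((contDiff_polarField n κ).comp
    (contDiff_stretch (n := n) hκ hh)).contDiffOn.exists_lipschitzOnWith one_ne_zero
    (convex_closedBall 0 r) (isCompact_closedBall 0 r)
  have hright : ∀ y, ∀ t ∈ Ico 0 L,
      HasDerivWithinAt (z y) (polarField n κ (stretch n κ h' (z y t))) (Ici t) t := fun y t ht =>
    (S y t (Ico_subset_Icc_self ht)).mono_of_mem_nhdsWithin
      (mem_of_superset (Icc_mem_nhdsGE ht.2) (Icc_subset_Icc_left ht.1))
  have hmem : ∀ y, ‖z y 0‖ ≤ ‖z x 0‖ + 1 → ∀ t ∈ Ico 0 L, z y t ∈ Metric.closedBall 0 r :=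
    fun y hy t ht => mem_closedBall_zero_iff.2 (hr _ (S y) hy t (Ico_subset_Icc_self ht))
  have hdist : ∀ᶠ y in nhds x, dist (z y L) (z x L) ≤ dist (z y 0) (z x 0) * exp (K * (L - 0)) := by
    filter_upwards [h0.norm.continuousAt.eventually_le_const (lt_add_one ‖z x 0‖)] with y hy
    exact dist_le_of_trajectories_ODE_of_mem (v := fun _ => polarField n κ ∘ stretch n κ h')
      (fun _ _ => hK) (S y).continuousOn (hright y) (hmem y hy) (S x).continuousOn (hright x)
      (hmem x (lt_add_one _).le) le_rfl L ⟨hL, le_rfl⟩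
  refine tendsto_iff_dist_tendsto_zero.2 (squeeze_zero' (Eventually.of_forall fun _ => dist_nonneg)
    hdist ?_)
  have hzero := (tendsto_iff_dist_tendsto_zero.1 (h0.tendsto x)).mul_const (exp (K * (L - 0)))
  rwa [zero_mul] at hzero

end Endpoint

section Comparison

variable {n : ℕ} {κ L : ℝ} {h h' h'' : ℝ → ℝ} {z z₁ z₂ : ℝ → ℝ × ℝ}

lemma nat_mul_mul_pow_pred_le (hn : n ≠ 0) {x y : ℝ} (hx : 0 ≤ x) (hy : 0 < y) :
    (n : ℝ) * x * y ^ (n - 1) ≤ x ^ n + ((n : ℝ) - 1) * y ^ n := by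
  have hbern := one_add_mul_sub_le_pow (a := x / y) (by linarith [div_nonneg hx hy.le]) n
  rw [div_pow, le_div_iff₀ (pow_pos hy n)] at hbern
  have hexpand : (1 + n * (x / y - 1)) * y ^ n = (1 - n) * y ^ n + n * x * y ^ (n - 1) := by
    rw [← mul_pow_sub_one hn y]
    field_simp
    ring
  linarith

lemma pairing_deriv_nonneg (hn : n ≠ 0) (hκ : 0 < κ) (hh : GoodH h h' h'') {p₁ p₂ : ℝ}
    (h₁ : 0 < p₁) (h₂ : 0 < p₂) (w₁ w₂ : ℝ) :
    0 ≤ κ * ((n : ℝ) - 1) * (p₂ ^ n - p₁ ^ n) * (exp (n * w₁) - exp (n * w₂)) +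
      (stressC n κ h' p₁ w₁ - stressC n κ h' p₂ w₂) *
        (n * (p₁ * exp (n * w₁) - p₂ * exp (n * w₂))) := by
  have hamgm₁ := nat_mul_mul_pow_pred_le hn h₁.le h₂
  have hamgm₂ := nat_mul_mul_pow_pred_le hn h₂.le h₁
  have hmono : 0 ≤ (h' (p₁ * exp (n * w₁)) - h' (p₂ * exp (n * w₂))) *
      (p₁ * exp (n * w₁) - p₂ * exp (n * w₂)) := by
    have hm := hh.deriv_strictMonoOn.monotoneOn
    have hd : ∀ {p}, 0 < p → ∀ w, p * exp (n * w) ∈ Ioi (0 : ℝ) := fun hp w =>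
      mul_pos hp (exp_pos _)
    rcases le_total (p₁ * exp (n * w₁)) (p₂ * exp (n * w₂)) with hle | hle
    · exact mul_nonneg_of_nonpos_of_nonpos (sub_nonpos.2 (hm (hd h₁ w₁) (hd h₂ w₂) hle))
        (sub_nonpos.2 hle)
    · exact mul_nonneg (sub_nonneg.2 (hm (hd h₂ w₂) (hd h₁ w₁) hle)) (sub_nonneg.2 hle)
  rw [mul_assoc] at hamgm₁ hamgm₂
  have hx := exp_pos (n * w₁)
  have hy := exp_pos (n * w₂)
  simp only [stressC, ← mul_pow_sub_one hn] at hamgm₁ hamgm₂ ⊢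
  nlinarith [mul_nonneg (mul_nonneg hκ.le hx.le) (sub_nonneg.2 hamgm₁),
    mul_nonneg (mul_nonneg hκ.le hy.le) (sub_nonneg.2 hamgm₂),
    mul_nonneg (Nat.cast_nonneg (α := ℝ) n) hmono]

lemma stretch_lt_stretch (hκ : 0 < κ) (hh : GoodH h h' h'') {x y : ℝ × ℝ} (hq : x.1 < y.1)
    (hw : y.2 ≤ x.2) : stretch n κ h' x < stretch n κ h' y := by
  by_contra! hle
  have := stressC_le_stressC (n := n) hκ hh (stretch_pos hκ hh y) hle hw
  rw [stressC_stretch hκ hh, stressC_stretch hκ hh] at this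
  exact this.not_gt hq

namespace IsPolarSol

lemma monotoneOn_pairing (hn : n ≠ 0) (hκ : 0 < κ) (hh : GoodH h h' h'')
    (S₁ : IsPolarSol n κ h' L z₁) (S₂ : IsPolarSol n κ h' L z₂) :
    MonotoneOn (fun s => ((z₁ s).1 - (z₂ s).1) *
      (exp (n * ((z₁ s).2 + s)) - exp (n * ((z₂ s).2 + s)))) (Icc 0 L) := by
  have hexp : ∀ {z}, IsPolarSol n κ h' L z → ∀ s ∈ Icc 0 L,
      HasDerivWithinAt (fun s => exp (n * ((z s).2 + s)))
        (exp (n * ((z s).2 + s)) * (n * (stretch n κ h' (z s) - 1 + 1))) (Icc 0 L) s :=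
    fun S s hs => (((S.hasDeriv_snd hs).add (hasDerivWithinAt_id s _)).const_mul _).exp
  refine monotoneOn_Icc_of_hasDerivWithinAt (fun s hs =>
    ((S₁.hasDeriv_fst hs).sub (S₂.hasDeriv_fst hs)).mul ((hexp S₁ s hs).sub (hexp S₂ s hs)))
    fun s _ => ?_
  have hpair := mul_nonneg (exp_pos (n * s)).le (pairing_deriv_nonneg hn hκ hh
    (stretch_pos (n := n) hκ hh (z₁ s)) (stretch_pos (n := n) hκ hh (z₂ s)) (z₁ s).2 (z₂ s).2)
  rw [stressC_stretch hκ hh, stressC_stretch hκ hh] at hpair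
  simp only [Pi.sub_apply, mul_add (n : ℝ), exp_add, sub_add_cancel]
  linarith

lemma exists_Ioc_lt_of_fst_lt (hκ : 0 < κ) (hh : GoodH h h' h'') (S₁ : IsPolarSol n κ h' L z₁)
    (S₂ : IsPolarSol n κ h' L z₂) (hL : 0 < L) (hw : (z₁ 0).2 = (z₂ 0).2)
    (hq : (z₁ 0).1 < (z₂ 0).1) :
    ∃ η ∈ Ioc 0 L, ∀ t ∈ Ioc 0 η, (z₁ t).1 < (z₂ t).1 ∧ (z₁ t).2 < (z₂ t).2 := by
  have h0 : (0 : ℝ) ∈ Icc 0 L := ⟨le_rfl, hL.le⟩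
  have hfst : ∀ {z}, IsPolarSol n κ h' L z → ContinuousOn (fun s => (z s).1) (Icc 0 L) := fun S =>
    continuous_fst.comp_continuousOn S.continuousOn
  have hnear : {s | stretch n κ h' (z₁ s) < stretch n κ h' (z₂ s) ∧ (z₁ s).1 < (z₂ s).1} ∈
      nhdsWithin 0 (Ici 0) := by
    rw [← nhdsWithin_Icc_eq_nhdsGE hL]
    exact ((S₁.continuousOn_stretch hκ hh 0 h0).eventually_lt (S₂.continuousOn_stretch hκ hh 0 h0)
      (stretch_lt_stretch hκ hh hq hw.ge)).and
      ((hfst S₁ 0 h0).eventually_lt (hfst S₂ 0 h0) hq)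
  obtain ⟨η, hη, hsub⟩ := mem_nhdsGE_iff_exists_Icc_subset.1 hnear
  refine ⟨min η L, ⟨lt_min hη hL, min_le_right _ _⟩, fun t ht => ?_⟩
  have htη : Icc 0 t ⊆ Icc 0 η := Icc_subset_Icc_right (ht.2.trans (min_le_left _ _))
  have htL : Icc 0 t ⊆ Icc 0 L := Icc_subset_Icc_right (ht.2.trans (min_le_right _ _))
  have hgap := strictMonoOn_Icc_of_hasDerivWithinAt
    (fun s hs => ((S₂.hasDeriv_snd (htL hs)).sub (S₁.hasDeriv_snd (htL hs))).mono htL)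
    (fun s hs => by linarith [(hsub (htη hs)).1]) ⟨le_rfl, ht.1.le⟩ ⟨ht.1.le, le_rfl⟩ ht.1
  simp only [Pi.sub_apply, hw, sub_self, sub_pos] at hgap
  exact ⟨(hsub (htη ⟨ht.1.le, le_rfl⟩)).2, hgap⟩

lemma lt_of_fst_lt (hn : n ≠ 0) (hκ : 0 < κ) (hh : GoodH h h' h'')
    (S₁ : IsPolarSol n κ h' L z₁) (S₂ : IsPolarSol n κ h' L z₂) (hw : (z₁ 0).2 = (z₂ 0).2)
    (hq : (z₁ 0).1 < (z₂ 0).1) (hL : 0 < L) : (z₁ L).2 < (z₂ L).2 := by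
  obtain ⟨η, ⟨hη, hηL⟩, hlt⟩ := exists_Ioc_lt_of_fst_lt hκ hh S₁ S₂ hL hw hq
  obtain ⟨hqη, hwη⟩ := hlt η ⟨hη, le_rfl⟩
  have hsnd : ∀ {z}, IsPolarSol n κ h' L z → ContinuousOn (fun s => (z s).2) (Icc 0 L) := fun S =>
    continuous_snd.comp_continuousOn S.continuousOn
  by_contra! hle
  obtain ⟨t, ht, htz⟩ := intermediate_value_Icc' hηL
    (((hsnd S₂).sub (hsnd S₁)).mono (Icc_subset_Icc_left hη.le))
    ⟨sub_nonpos.2 hle, sub_nonneg.2 hwη.le⟩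
  have hmono := S₁.monotoneOn_pairing hn hκ hh S₂ ⟨hη.le, hηL⟩ ⟨hη.le.trans ht.1, ht.2⟩ ht.1
  have hexp : exp (n * ((z₁ η).2 + η)) < exp (n * ((z₂ η).2 + η)) :=
    have : (0 : ℝ) < n := by positivity
    exp_lt_exp.2 (by gcongr)
  simp only [sub_eq_zero.1 htz, sub_self, mul_zero] at hmono
  exact hmono.not_gt (mul_pos_of_neg_of_neg (sub_neg.2 hqη) (sub_neg.2 hexp))

end IsPolarSol

end Comparison

section Traction

/-- The modified Cauchy stress `T̂` at the state `z = (q, w)`. -/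
def traction (n : ℕ) (κ : ℝ) (z : ℝ × ℝ) : ℝ := z.1 + κ * ((n : ℝ) - 1) * (1 / n + z.2)

variable {n : ℕ} {κ L : ℝ} {h h' h'' : ℝ → ℝ} {z z₁ z₂ : ℝ → ℝ × ℝ}

namespace IsPolarSol

lemma monotoneOn_snd (hκ : 0 < κ) (hh : GoodH h h' h'') (S : IsPolarSol n κ h' L z)
    (hp : 1 ≤ stretch n κ h' (z 0)) : MonotoneOn (fun s => (z s).2) (Icc 0 L) :=
  monotoneOn_Icc_of_hasDerivWithinAt (fun _ hs => S.hasDeriv_snd hs) fun _ hs =>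
    sub_nonneg.2 (le_of_not_gt fun hlt => hp.not_gt ((S.stretch_lt_one_iff hκ hh hs).1 hlt))

lemma antitoneOn_snd (hκ : 0 < κ) (hh : GoodH h h' h'') (S : IsPolarSol n κ h' L z)
    (hp : stretch n κ h' (z 0) ≤ 1) : AntitoneOn (fun s => (z s).2) (Icc 0 L) := by
  have hneg := monotoneOn_Icc_of_hasDerivWithinAt (fun _ hs => (S.hasDeriv_snd hs).neg) fun s hs =>
    neg_nonneg.2 (sub_nonpos.2
      (le_of_not_gt fun hlt => hp.not_gt ((S.one_lt_stretch_iff hκ hh hs).1 hlt)))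
  exact fun s hs t ht hst => neg_le_neg_iff.1 (hneg hs ht hst)

lemma snd_lt_snd (hκ : 0 < κ) (hh : GoodH h h' h'') (S : IsPolarSol n κ h' L z)
    (hp : 1 < stretch n κ h' (z 0)) (hL : 0 < L) : (z 0).2 < (z L).2 :=
  strictMonoOn_Icc_of_hasDerivWithinAt (fun _ hs => S.hasDeriv_snd hs)
    (fun _ hs => sub_pos.2 ((S.one_lt_stretch_iff hκ hh hs).2 hp)) ⟨le_rfl, hL.le⟩
    ⟨hL.le, le_rfl⟩ hL

lemma snd_gt_snd (hκ : 0 < κ) (hh : GoodH h h' h'') (S : IsPolarSol n κ h' L z)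
    (hp : stretch n κ h' (z 0) < 1) (hL : 0 < L) : (z L).2 < (z 0).2 :=
  neg_lt_neg_iff.1 (strictMonoOn_Icc_of_hasDerivWithinAt (fun _ hs => (S.hasDeriv_snd hs).neg)
    (fun _ hs => neg_pos.2 (sub_neg.2 ((S.stretch_lt_one_iff hκ hh hs).2 hp))) ⟨le_rfl, hL.le⟩
    ⟨hL.le, le_rfl⟩ hL)

lemma hasDeriv_traction (S : IsPolarSol n κ h' L z) {s : ℝ} (hs : s ∈ Icc 0 L) :
    HasDerivWithinAt (fun s => traction n κ (z s))
      (κ * ((n : ℝ) - 1) * (stretch n κ h' (z s) - stretch n κ h' (z s) ^ n)) (Icc 0 L) s :=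
  ((S.hasDeriv_fst hs).add (((S.hasDeriv_snd hs).const_add _).const_mul _)).congr_deriv (by ring)

lemma strictAntiOn_traction (hn : 2 ≤ n) (hκ : 0 < κ) (hh : GoodH h h' h'')
    (S : IsPolarSol n κ h' L z) (hp : 1 < stretch n κ h' (z 0)) :
    StrictAntiOn (fun s => traction n κ (z s)) (Icc 0 L) := by
  have hn' : (2 : ℝ) ≤ n := by exact_mod_cast hn
  have hneg := strictMonoOn_Icc_of_hasDerivWithinAt (fun _ hs => (S.hasDeriv_traction hs).neg)
    fun s hs => neg_pos.2 (mul_neg_of_pos_of_neg (mul_pos hκ (by linarith))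
      (sub_neg.2 (lt_self_pow₀ ((S.one_lt_stretch_iff hκ hh hs).2 hp) hn)))
  exact fun s hs t ht hst => neg_lt_neg_iff.1 (hneg hs ht hst)

lemma strictMonoOn_traction (hn : 2 ≤ n) (hκ : 0 < κ) (hh : GoodH h h' h'')
    (S : IsPolarSol n κ h' L z) (hp : stretch n κ h' (z 0) < 1) :
    StrictMonoOn (fun s => traction n κ (z s)) (Icc 0 L) := by
  have hn' : (2 : ℝ) ≤ n := by exact_mod_cast hn
  exact strictMonoOn_Icc_of_hasDerivWithinAt (fun _ hs => S.hasDeriv_traction hs)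
    fun s hs => mul_pos (mul_pos hκ (by linarith)) (sub_pos.2
      (pow_lt_self_of_lt_one₀ (stretch_pos hκ hh _) ((S.stretch_lt_one_iff hκ hh hs).2 hp) hn))

lemma endpoint_lt_of_one_lt (hn : 2 ≤ n) (hκ : 0 < κ) (hh : GoodH h h' h'')
    (S₁ : IsPolarSol n κ h' L z₁) (S₂ : IsPolarSol n κ h' L z₂) (hL : 0 ≤ L)
    (hw : (z₁ 0).2 < (z₂ 0).2) (hT : traction n κ (z₁ 0) ≤ traction n κ (z₂ 0))
    (hp₁ : 1 < stretch n κ h' (z₁ 0)) (hp₂ : 1 ≤ stretch n κ h' (z₂ 0)) :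
    (z₁ L).2 < (z₂ L).2 := by
  have h0 : (0 : ℝ) ∈ Icc 0 L := ⟨le_rfl, hL⟩
  have hmono₂ := S₂.monotoneOn_snd hκ hh hp₂
  by_contra! hle
  obtain ⟨τ, hτ, hwτ⟩ := intermediate_value_Icc hL
    (continuous_snd.comp_continuousOn S₁.continuousOn)
    ⟨hw.le, (hmono₂ h0 ⟨hL, le_rfl⟩ hL).trans hle⟩
  simp only [Function.comp_apply] at hwτ
  have hτ0 : 0 < τ := hτ.1.lt_of_ne fun heq => hw.ne (by rw [← hwτ, heq])
  have hq : (z₁ τ).1 < (z₂ 0).1 := by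
    have := (S₁.strictAntiOn_traction hn hκ hh hp₁ h0 hτ hτ0).trans_le hT
    simp only [traction, hwτ] at this
    linarith
  rcases hτ.2.eq_or_lt with rfl | hτL
  · have hp₂' := ((S₁.one_lt_stretch_iff hκ hh hτ).2 hp₁).trans (stretch_lt_stretch hκ hh hq hwτ.ge)
    linarith [S₂.snd_lt_snd hκ hh hp₂' hτ0]
  · have hlt := (S₁.shift hτ.1).lt_of_fst_lt (by omega) hκ hh (S₂.restrict (by linarith))
      (by rwa [zero_add]) (by rwa [zero_add]) (sub_pos.2 hτL)
    rw [sub_add_cancel] at hlt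
    linarith [hmono₂ ⟨(sub_pos.2 hτL).le, by linarith⟩ ⟨hL, le_rfl⟩ (sub_le_self L hτ.1)]

lemma endpoint_lt_of_lt_one (hn : 2 ≤ n) (hκ : 0 < κ) (hh : GoodH h h' h'')
    (S₁ : IsPolarSol n κ h' L z₁) (S₂ : IsPolarSol n κ h' L z₂) (hL : 0 ≤ L)
    (hw : (z₁ 0).2 < (z₂ 0).2) (hT : traction n κ (z₁ 0) ≤ traction n κ (z₂ 0))
    (hp₁ : stretch n κ h' (z₁ 0) ≤ 1) (hp₂ : stretch n κ h' (z₂ 0) < 1) :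
    (z₁ L).2 < (z₂ L).2 := by
  have h0 : (0 : ℝ) ∈ Icc 0 L := ⟨le_rfl, hL⟩
  have hanti₁ := S₁.antitoneOn_snd hκ hh hp₁
  by_contra! hle
  obtain ⟨τ, hτ, hwτ⟩ := intermediate_value_Icc' hL
    (continuous_snd.comp_continuousOn S₂.continuousOn)
    ⟨hle.trans (hanti₁ h0 ⟨hL, le_rfl⟩ hL), hw.le⟩
  simp only [Function.comp_apply] at hwτ
  have hτ0 : 0 < τ := hτ.1.lt_of_ne fun heq => hw.ne (by rw [← hwτ, heq])
  have hq : (z₁ 0).1 < (z₂ τ).1 := by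
    have := hT.trans_lt (S₂.strictMonoOn_traction hn hκ hh hp₂ h0 hτ hτ0)
    simp only [traction, hwτ] at this
    linarith
  rcases hτ.2.eq_or_lt with rfl | hτL
  · have hp₁' := (stretch_lt_stretch hκ hh hq hwτ.le).trans ((S₂.stretch_lt_one_iff hκ hh hτ).2 hp₂)
    linarith [S₁.snd_gt_snd hκ hh hp₁' hτ0]
  · have hlt := (S₁.restrict (by linarith)).lt_of_fst_lt (by omega) hκ hh (S₂.shift hτ.1)
      (by rw [zero_add, hwτ]) (by rwa [zero_add]) (sub_pos.2 hτL)
    rw [sub_add_cancel] at hlt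
    linarith [hanti₁ ⟨(sub_pos.2 hτL).le, by linarith⟩ ⟨hL, le_rfl⟩ (sub_le_self L hτ.1)]

lemma endpoint_lt (hn : 2 ≤ n) (hκ : 0 < κ) (hh : GoodH h h' h'')
    (S₁ : IsPolarSol n κ h' L z₁) (S₂ : IsPolarSol n κ h' L z₂) (hL : 0 ≤ L)
    (hT₁ : traction n κ (z₁ 0) ≤ 0) (hT₂ : 0 ≤ traction n κ (z₂ 0)) (hw : (z₁ 0).2 < (z₂ 0).2) :
    (z₁ L).2 < (z₂ L).2 := by
  have hn' : (2 : ℝ) ≤ n := by exact_mod_cast hn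
  have h0 : (0 : ℝ) ∈ Icc 0 L := ⟨le_rfl, hL⟩
  have hL' : L ∈ Icc 0 L := ⟨hL, le_rfl⟩
  rcases lt_or_ge 1 (stretch n κ h' (z₁ 0)) with hp₁ | hp₁ <;>
    rcases lt_or_ge (stretch n κ h' (z₂ 0)) 1 with hp₂ | hp₂
  · have hT₁L := (S₁.strictAntiOn_traction hn hκ hh hp₁).antitoneOn h0 hL' hL
    have hT₂L := (S₂.strictMonoOn_traction hn hκ hh hp₂).monotoneOn h0 hL' hL
    have hp := ((S₂.stretch_lt_one_iff hκ hh hL').2 hp₂).trans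
      ((S₁.one_lt_stretch_iff hκ hh hL').2 hp₁)
    by_contra! hle
    have hq := stressC_lt_stressC (n := n) hκ hh (stretch_pos hκ hh (z₂ L)) hp hle
    rw [stressC_stretch hκ hh, stressC_stretch hκ hh] at hq
    simp only [traction] at hT₁ hT₂ hT₁L hT₂L
    nlinarith [mul_le_mul_of_nonneg_left hle (mul_nonneg hκ.le (by linarith : (0 : ℝ) ≤ n - 1))]
  · exact S₁.endpoint_lt_of_one_lt hn hκ hh S₂ hL hw (hT₁.trans hT₂) hp₁ hp₂
  · exact S₁.endpoint_lt_of_lt_one hn hκ hh S₂ hL hw (hT₁.trans hT₂) hp₁ hp₂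
  · exact ((S₁.antitoneOn_snd hκ hh hp₁ h0 hL' hL).trans_lt hw).trans_le
      (S₂.monotoneOn_snd hκ hh hp₂ h0 hL' hL)

end IsPolarSol

end Traction

section Shooting

variable {n : ℕ} {κ L W : ℝ} {h h' h'' : ℝ → ℝ} {z : ℝ → ℝ × ℝ}

lemma exists_isPolarSol_snd_eq (hn : 2 ≤ n) (hκ : 0 < κ) (hh : GoodH h h' h'') (hL : 0 ≤ L)
    {ι : ℝ → ℝ × ℝ} (hι : Continuous ι)
    (hlow : ∃ x, ∀ z, IsPolarSol n κ h' L z → z 0 = ι x → (z L).2 ≤ W)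
    (hhigh : ∃ x, ∀ z, IsPolarSol n κ h' L z → z 0 = ι x → W ≤ (z L).2) :
    ∃ x z, IsPolarSol n κ h' L z ∧ z 0 = ι x ∧ (z L).2 = W := by
  choose z S hz0 using fun x => exists_isPolarSol hn hκ hh hL (ι x)
  have hcont : Continuous fun x => (z x L).2 :=
    (continuous_isPolarSol_endpoint hn hκ hh hL S (by simpa only [hz0] using hι)).snd
  obtain ⟨a, ha⟩ := hlow
  obtain ⟨b, hb⟩ := hhigh
  obtain ⟨x, hx⟩ := mem_range_of_exists_le_of_exists_ge hcont ⟨a, ha _ (S a) (hz0 a)⟩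
    ⟨b, hb _ (S b) (hz0 b)⟩
  exact ⟨x, z x, S x, hz0 x, hx⟩

namespace IsPolarSol

lemma snd_le_snd_add (hκ : 0 < κ) (hh : GoodH h h' h'') (S : IsPolarSol n κ h' L z) {s : ℝ}
    (hs : s ∈ Icc 0 L) : (z 0).2 ≤ (z s).2 + s := by
  have hmono := monotoneOn_Icc_of_hasDerivWithinAt
    (fun s hs => (S.hasDeriv_snd hs).add (hasDerivWithinAt_id s _))
    (fun s _ => by linarith [stretch_pos (n := n) hκ hh (z s)]) ⟨le_rfl, hs.1.trans hs.2⟩ hs hs.1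
  simpa using hmono

lemma mul_snd_add_traction_le (hn : 2 ≤ n) (hκ : 0 < κ) (hh : GoodH h h' h'') (hL : 0 ≤ L)
    (S : IsPolarSol n κ h' L z) (hp : 1 < stretch n κ h' (z 0)) :
    κ * ((n : ℝ) - 1) * (z L).2 + traction n κ (z L) ≤
      κ * ((n : ℝ) - 1) * (z 0).2 + traction n κ (z 0) := by
  have hn' : (2 : ℝ) ≤ n := by exact_mod_cast hn
  refine neg_le_neg_iff.1 (monotoneOn_Icc_of_hasDerivWithinAt (fun s hs =>
    (((S.hasDeriv_snd hs).const_mul (κ * ((n : ℝ) - 1))).add (S.hasDeriv_traction hs)).neg)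
    (fun s hs => ?_) ⟨le_rfl, hL⟩ ⟨hL, le_rfl⟩ hL)
  have hp1 := (S.one_lt_stretch_iff hκ hh hs).2 hp
  have hbern := one_add_mul_sub_le_pow (a := stretch n κ h' (z s)) (by linarith) n
  have hpow : stretch n κ h' (z s) - 1 + stretch n κ h' (z s) ≤ stretch n κ h' (z s) ^ n := by
    nlinarith
  nlinarith [mul_nonneg (mul_pos hκ (by linarith : (0 : ℝ) < n - 1)).le (sub_nonneg.2 hpow)]

lemma snd_le_of_traction_eq_zero (hn : 2 ≤ n) (hκ : 0 < κ) (hh : GoodH h h' h'') (hL : 0 ≤ L)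
    (S : IsPolarSol n κ h' L z) (hT : traction n κ (z 0) = 0) (hW : (z 0).2 ≤ W)
    (hC : κ * ((n : ℝ) - 1) * (z 0).2 ≤
      κ * ((n : ℝ) - 1) * W + traction n κ (stressC n κ h' 1 W, W)) :
    (z L).2 ≤ W := by
  have hn' : (2 : ℝ) ≤ n := by exact_mod_cast hn
  have h0 : (0 : ℝ) ∈ Icc 0 L := ⟨le_rfl, hL⟩
  have hL' : L ∈ Icc 0 L := ⟨hL, le_rfl⟩
  rcases le_or_gt (stretch n κ h' (z 0)) 1 with hp | hp
  · exact (S.antitoneOn_snd hκ hh hp h0 hL' hL).trans hW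
  · by_contra! hlt
    have hq := stressC_le_stressC (n := n) hκ hh one_pos
      ((S.one_lt_stretch_iff hκ hh hL').2 hp).le hlt.le
    rw [stressC_stretch hκ hh] at hq
    have hsum := S.mul_snd_add_traction_le hn hκ hh hL hp
    have hc := mul_lt_mul_of_pos_left hlt (mul_pos hκ (by linarith : (0 : ℝ) < n - 1))
    simp only [traction] at hC hsum hT
    linarith

end IsPolarSol

lemma exists_isPolarSol_traction_eq_zero (hn : 2 ≤ n) (hκ : 0 < κ) (hh : GoodH h h' h'')
    (hL : 0 ≤ L) (W : ℝ) :
    ∃ z, IsPolarSol n κ h' L z ∧ traction n κ (z 0) = 0 ∧ (z L).2 = W := by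
  have hn' : (2 : ℝ) ≤ n := by exact_mod_cast hn
  have hc : 0 < κ * ((n : ℝ) - 1) := mul_pos hκ (by linarith)
  set C := traction n κ (stressC n κ h' 1 W, W)
  refine (exists_isPolarSol_snd_eq (W := W) hn hκ hh hL
    (ι := fun x => (-(κ * ((n : ℝ) - 1) * (1 / n + x)), x)) (by fun_prop)
    ⟨min W (W + C / (κ * ((n : ℝ) - 1))), fun z S hz0 => ?_⟩ ⟨W + L, fun z S hz0 => ?_⟩).elim
    fun x ⟨z, S, hz0, hzL⟩ => ⟨z, S, by simp only [hz0, traction, neg_add_cancel], hzL⟩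
  · refine S.snd_le_of_traction_eq_zero hn hκ hh hL (by simp only [hz0, traction, neg_add_cancel])
      (by simp only [hz0, min_le_left]) ?_
    have hle := mul_le_mul_of_nonneg_left (min_le_right W (W + C / (κ * ((n : ℝ) - 1)))) hc.le
    rw [mul_add _ W, mul_div_cancel₀ _ hc.ne'] at hle
    rwa [hz0]
  · have := S.snd_le_snd_add hκ hh ⟨hL, le_rfl⟩
    rw [hz0] at this
    exact le_of_add_le_add_right this

lemma decayRate_self_le (hn : n ≠ 0) (hκ : 0 < κ) (hh : GoodH h h' h'') {p : ℝ} (hp : 1 ≤ p)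
    (w : ℝ) : decayRate n κ h'' p p w ≤ n * p := by
  have hp0 : 0 < p := by linarith
  have hn' : (1 : ℝ) ≤ n := by exact_mod_cast Nat.one_le_iff_ne_zero.2 hn
  have hsum : ∑ i ∈ Finset.range n, p ^ i ≤ n * p ^ (n - 1) := by
    have := Finset.sum_le_card_nsmul (Finset.range n) (fun i => p ^ i) (p ^ (n - 1)) fun i hi =>
      pow_le_pow_right₀ hp (Nat.le_sub_one_of_lt (Finset.mem_range.1 hi))
    rwa [Finset.card_range, nsmul_eq_mul] at this
  rw [decayRate, div_le_iff₀ (stressDp_pos hκ hh hp0 w)]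
  calc _ ≤ κ * ((n : ℝ) - 1) * (n * p ^ (n - 1)) + stressDw n h'' p w := by gcongr
    _ = n * p * stressDp n κ h'' p w := by
      rcases Nat.eq_or_lt_of_le (Nat.one_le_iff_ne_zero.2 hn) with rfl | hn1
      · simp [stressDp, stressDw]; ring
      rw [stressDp, stressDw, ← mul_pow_sub_one (Nat.sub_ne_zero_of_lt hn1) p,
        Nat.cast_pred (by omega)]
      ring

namespace IsPolarSol

lemma exp_mul_one_add_le (hn : n ≠ 0) (hκ : 0 < κ) (hh : GoodH h h' h'') (hL : 0 ≤ L)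
    (S : IsPolarSol n κ h' L z) (hp : 1 < stretch n κ h' (z 0)) :
    exp (n * (z 0).2) * (1 + n * (stretch n κ h' (z 0) - 1) * L) ≤ exp (n * ((z L).2 + L)) := by
  have h0 : (0 : ℝ) ∈ Icc 0 L := ⟨le_rfl, hL⟩
  have hexp : ∀ s ∈ Icc 0 L, HasDerivWithinAt (fun s => exp (n * ((z s).2 + s)))
      (exp (n * ((z s).2 + s)) * (n * stretch n κ h' (z s))) (Icc 0 L) s := fun s hs =>
    (((S.hasDeriv_snd hs).add (hasDerivWithinAt_id s _)).const_mul (n : ℝ)).exp.congr_deriv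
      (by simp only [id, Pi.add_apply, sub_add_cancel])
  have hexcess : MonotoneOn (fun s => (stretch n κ h' (z s) - 1) * exp (n * ((z s).2 + s)))
      (Icc 0 L) := by
    refine monotoneOn_Icc_of_hasDerivWithinAt (fun s hs =>
      ((hasDerivWithinAt_stretch hκ hh (S s hs)).sub_const 1).mul (hexp s hs)) fun s hs => ?_
    have hp1 := (S.one_lt_stretch_iff hκ hh hs).2 hp
    nlinarith [mul_nonneg (mul_nonneg (sub_pos.2 hp1).le (exp_pos (n * ((z s).2 + s))).le)
      (sub_nonneg.2 (decayRate_self_le hn hκ hh hp1.le (z s).2))]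
  have hline := monotoneOn_Icc_of_hasDerivWithinAt (fun s hs => (hexp s hs).sub
    ((hasDerivWithinAt_id s _).const_mul (n * (stretch n κ h' (z 0) - 1) * exp (n * (z 0).2))))
    (fun s hs => by
      have hle := hexcess h0 hs hs.1
      simp only [add_zero] at hle
      have hpos := exp_pos (n * ((z s).2 + s))
      nlinarith [mul_le_mul_of_nonneg_left hle (Nat.cast_nonneg (α := ℝ) n),
        mul_nonneg (Nat.cast_nonneg (α := ℝ) n) hpos.le]) h0 ⟨hL, le_rfl⟩ hL
  simp only [Pi.sub_apply, id, add_zero, mul_zero, sub_zero] at hline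
  linarith

lemma snd_le_of_fst_le (hn : 2 ≤ n) (hκ : 0 < κ) (hh : GoodH h h' h'') (hL : 0 ≤ L)
    (S : IsPolarSol n κ h' L z) {η : ℝ} (hη : 0 < η)
    (hq : (z 0).1 ≤ stressC n κ h' η ((z 0).2 - L) - κ * ((n : ℝ) - 1) * L) :
    (z L).2 ≤ (z 0).2 + (η - 1) * L := by
  have hn' : (2 : ℝ) ≤ n := by exact_mod_cast hn
  have hc : 0 < κ * ((n : ℝ) - 1) := mul_pos hκ (by linarith)
  have h0 : (0 : ℝ) ∈ Icc 0 L := ⟨le_rfl, hL⟩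
  have hstress : ∀ s ∈ Icc 0 L, (z s).1 ≤ stressC n κ h' η ((z 0).2 - L) := fun s hs => by
    have := monotoneOn_Icc_of_hasDerivWithinAt (fun s hs =>
      ((hasDerivWithinAt_id s _).const_mul (κ * ((n : ℝ) - 1))).sub (S.hasDeriv_fst hs))
      (fun s _ => by
        nlinarith [mul_pos hc (pow_pos (stretch_pos (n := n) hκ hh (z s)) n)]) h0 hs hs.1
    simp only [Pi.sub_apply, id, mul_zero, zero_sub] at this
    nlinarith [mul_le_mul_of_nonneg_left hs.2 hc.le]
  have hstretch : ∀ s ∈ Icc 0 L, stretch n κ h' (z s) ≤ η := fun s hs => by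
    by_contra! hlt
    refine (hstress s hs).not_gt ?_
    rw [← stressC_stretch hκ hh (z s)]
    exact stressC_lt_stressC hκ hh hη hlt (by linarith [S.snd_le_snd_add hκ hh hs, hs.2])
  have hline := monotoneOn_Icc_of_hasDerivWithinAt (fun s hs =>
    ((hasDerivWithinAt_id s _).const_mul (η - 1)).sub (S.hasDeriv_snd hs))
    (fun s hs => by linarith [hstretch s hs]) h0 ⟨hL, le_rfl⟩ hL
  simp only [Pi.sub_apply, id, mul_zero, zero_sub] at hline
  linarith

end IsPolarSol

lemma exists_isPolarSol_inner_snd_eq (hn : 2 ≤ n) (hκ : 0 < κ) (hh : GoodH h h' h'') (hL : 0 < L)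
    {w₀ : ℝ} (hW : w₀ < W + L) :
    ∃ z, IsPolarSol n κ h' L z ∧ (z 0).2 = w₀ ∧ (z L).2 = W := by
  have hn0 : (0 : ℝ) < n := by positivity
  set η := (W - w₀ + L) / L with hη_def
  have hη : 0 < η := div_pos (by linarith) hL
  set p₀ := 1 + exp (n * (W + L - w₀)) / (n * L)
  have hp₀ : 1 < p₀ := lt_add_of_pos_right _ (by positivity)
  refine (exists_isPolarSol_snd_eq (W := W) hn hκ hh hL.le (ι := fun x => (x, w₀)) (by fun_prop)
    ⟨stressC n κ h' η (w₀ - L) - κ * ((n : ℝ) - 1) * L, fun z S hz0 => ?_⟩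
    ⟨stressC n κ h' p₀ w₀, fun z S hz0 => ?_⟩).elim
    fun x ⟨z, S, hz0, hzL⟩ => ⟨z, S, by rw [hz0], hzL⟩
  · have hle := S.snd_le_of_fst_le hn hκ hh hL.le hη (by rw [hz0])
    rw [sub_mul, hη_def, div_mul_cancel₀ _ hL.ne', hz0] at hle
    linarith
  · have hstretch : stretch n κ h' (z 0) = p₀ := by
      rw [hz0, stretch_stressC hκ hh (by linarith)]
    have hgrow := S.exp_mul_one_add_le (by omega) hκ hh hL.le (hstretch ▸ hp₀)
    have hp₀' : n * (p₀ - 1) * L = exp (n * (W + L - w₀)) := by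
      simp only [p₀]
      field_simp
      ring
    have hlt : exp (n * (W + L)) < exp (n * ((z L).2 + L)) := by
      refine lt_of_lt_of_le ?_ hgrow
      rw [hstretch, hp₀', hz0, mul_one_add, ← exp_add, ← mul_add, add_sub_cancel]
      exact lt_add_of_pos_left _ (exp_pos _)
    linarith [lt_of_mul_lt_mul_left (exp_lt_exp.1 hlt) hn0.le]

end Shooting

section AbsolutelyContinuous

variable {a b : ℝ} {f f' φ φ' : ℝ → ℝ}

lemma absolutelyContinuousOnInterval_lipschitzOnWith_comp {C : ℝ≥0} {s : Set ℝ}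
    (hφ : LipschitzOnWith C φ s) (hf : AbsolutelyContinuousOnInterval f a b)
    (hs : MapsTo f (uIcc a b) s) : AbsolutelyContinuousOnInterval (fun x => φ (f x)) a b := by
  rw [absolutelyContinuousOnInterval_iff] at hf ⊢
  intro η hη
  obtain ⟨δ, hδ, hd⟩ := hf (η / (C + 1)) (by positivity)
  refine ⟨δ, hδ, fun E hE hEδ => ?_⟩
  calc _ ≤ ∑ i ∈ Finset.range E.1, C * dist (f (E.2 i).1) (f (E.2 i).2) :=
        Finset.sum_le_sum fun i hi =>
          hφ.dist_le_mul _ (hs (hE.1 i hi).1) _ (hs (hE.1 i hi).2)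
    _ = C * ∑ i ∈ Finset.range E.1, dist (f (E.2 i).1) (f (E.2 i).2) :=
        (Finset.mul_sum _ _ _).symm
    _ ≤ C * (η / (C + 1)) := by gcongr; exact (hd E hE hEδ).le
    _ < (C + 1) * (η / (C + 1)) := by gcongr; linarith
    _ = η := by field

lemma exists_lipschitzOnWith_of_hasDerivWithinAt
    (hf : ∀ x ∈ Icc a b, HasDerivWithinAt f (f' x) (Icc a b) x)
    (hc : ContinuousOn f' (Icc a b)) : ∃ C, LipschitzOnWith C f (Icc a b) := by
  obtain ⟨C, hC⟩ := isCompact_Icc.exists_bound_of_continuousOn hc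
  refine ⟨C.toNNReal, (convex_Icc a b).lipschitzOnWith_of_nnnorm_hasDerivWithin_le hf
    fun x hx => ?_⟩
  rw [← NNReal.coe_le_coe, coe_nnnorm]
  exact (hC x hx).trans (le_coe_toNNReal C)

lemma absolutelyContinuousOnInterval_of_hasDerivWithinAt (hab : a ≤ b)
    (hf : ∀ x ∈ Icc a b, HasDerivWithinAt f (f' x) (Icc a b) x)
    (hc : ContinuousOn f' (Icc a b)) : AbsolutelyContinuousOnInterval f a b := by
  obtain ⟨C, hC⟩ := exists_lipschitzOnWith_of_hasDerivWithinAt hf hc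
  rw [← uIcc_of_le hab] at hC
  exact hC.absolutelyContinuousOnInterval

lemma absolutelyContinuousOnInterval_comp_of_hasDerivAt
    (hφ : ∀ t, HasDerivAt φ (φ' t) t) (hc : Continuous φ')
    (hf : AbsolutelyContinuousOnInterval f a b) :
    AbsolutelyContinuousOnInterval (fun x => φ (f x)) a b := by
  obtain ⟨V, hV⟩ := isCompact_uIcc.exists_bound_of_continuousOn hf.continuousOn
  obtain ⟨C, hC⟩ := exists_lipschitzOnWith_of_hasDerivWithinAt (a := -V) (b := V)
    (fun x _ => (hφ x).hasDerivWithinAt) hc.continuousOn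
  exact absolutelyContinuousOnInterval_lipschitzOnWith_comp hC hf fun x hx => abs_le.1 (hV x hx)

lemma integrableOn_and_setIntegral_eq_sub_of_absolutelyContinuousOnInterval (hab : a ≤ b)
    (hf : AbsolutelyContinuousOnInterval f a b)
    (hd : ∀ᵐ x ∂(volume.restrict (Ioc a b)), HasDerivAt f (f' x) x) :
    IntegrableOn f' (Ioc a b) ∧ ∫ x in Ioc a b, f' x = f b - f a := by
  have hae : deriv f =ᵐ[volume.restrict (Ioc a b)] f' := by
    filter_upwards [hd] with x hx using hx.deriv
  constructor
  · have := (intervalIntegrable_iff_integrableOn_Ioc_of_le hab).1 hf.intervalIntegrable_deriv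
    exact this.congr hae
  · rw [← hf.integral_deriv_eq_sub, intervalIntegral.integral_of_le hab]
    exact (integral_congr_ae hae).symm

lemma hasDerivAt_pow_mul_log {n : ℕ} (hn : 2 ≤ n) (t : ℝ) :
    HasDerivAt (fun t => t ^ n * log t) (t ^ (n - 2) * (n * (t * log t) + t)) t := by
  obtain ⟨m, rfl⟩ := Nat.exists_eq_add_of_le' hn
  rcases eq_or_ne t 0 with rfl | ht
  · rw [hasDerivAt_iff_tendsto_slope]
    have hcont : Continuous fun t : ℝ => t ^ m * (t * log t) := by
      have := Real.continuous_mul_log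
      fun_prop
    have hlim := (hcont.tendsto 0).mono_left (nhdsWithin_le_nhds (s := {0}ᶜ))
    simp only [zero_mul, mul_zero, add_zero] at hlim ⊢
    refine hlim.congr' ?_
    filter_upwards [self_mem_nhdsWithin] with x hx
    have hx : x ≠ 0 := hx
    simp only [slope, vsub_eq_sub, sub_zero, smul_eq_mul, log_zero, mul_zero]
    field
  · refine ((hasDerivAt_pow (m + 2) t).mul (hasDerivAt_log ht)).congr_deriv ?_
    simp only [Nat.add_sub_cancel, Nat.add_succ_sub_one, pow_add, Nat.cast_add]
    field

lemma continuous_pow_mul_log_deriv (n : ℕ) :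
    Continuous fun t : ℝ => t ^ (n - 2) * (n * (t * log t) + t) := by
  have := Real.continuous_mul_log
  fun_prop

end AbsolutelyContinuous

section Admissible

variable {ε lam : ℝ} {v v' : ℝ → ℝ}

namespace AdmE

lemma absolutelyContinuousOnInterval (A : AdmE ε lam v v') (hε : ε ≤ 1) :
    AbsolutelyContinuousOnInterval v ε 1 := by
  have hprim := ((intervalIntegrable_iff_integrableOn_Ioc_of_le
    hε).2 A.intg).absolutelyContinuousOnInterval_intervalIntegral (c := ε) left_mem_uIcc
  have hconst : LipschitzOnWith 0 (fun _ : ℝ => v ε) (uIcc ε 1) :=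
    LipschitzWith.lipschitzOnWith (LipschitzWith.const _)
  have hsum := hconst.absolutelyContinuousOnInterval.add hprim
  rw [absolutelyContinuousOnInterval_iff] at hsum ⊢
  intro η hη
  obtain ⟨δ, hδ, hd⟩ := hsum η hη
  refine ⟨δ, hδ, fun E hE hEδ => lt_of_eq_of_lt ?_ (hd E hE hEδ)⟩
  have hftc : ∀ x ∈ uIcc ε 1, v x = v ε + ∫ t in ε..x, v' t := fun x hx => by
    rw [uIcc_of_le hε] at hx
    rw [intervalIntegral.integral_of_le hx.1, ← A.ftc x hx]
  refine Finset.sum_congr rfl fun i hi => ?_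
  rw [hftc _ (hE.1 i hi).1, hftc _ (hE.1 i hi).2]
  rfl

lemma continuousOn (A : AdmE ε lam v v') (hε : ε ≤ 1) : ContinuousOn v (Icc ε 1) := by
  simpa [uIcc_of_le hε] using (A.absolutelyContinuousOnInterval hε).continuousOn

lemma ae_hasDerivAt (A : AdmE ε lam v v') (hε : ε ≤ 1) :
    ∀ᵐ x ∂(volume.restrict (Ioc ε 1)), HasDerivAt v (v' x) x := by
  have hprim := ((intervalIntegrable_iff_integrableOn_Ioc_of_le
    hε).2 A.intg).ae_hasDerivAt_integral
  rw [ae_restrict_iff' measurableSet_Ioc]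
  have hne : ∀ᵐ x : ℝ, x ≠ 1 := by simp [ae_iff]
  filter_upwards [hprim, hne] with x hx hx1 hxI
  have hxu : x ∈ uIcc ε 1 := Icc_subset_uIcc (Ioc_subset_Icc_self hxI)
  have hderiv := (hx hxu ε left_mem_uIcc).const_add (v ε)
  refine hderiv.congr_of_eventuallyEq ?_
  filter_upwards [Ioo_mem_nhds hxI.1 (lt_of_le_of_ne hxI.2 hx1)] with y hy
  rw [intervalIntegral.integral_of_le hy.1.le, ← A.ftc y ⟨hy.1.le, hy.2.le⟩]

lemma strictMonoOn (A : AdmE ε lam v v') : StrictMonoOn v (Icc ε 1) := by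
  intro x hx y hy hxy
  rw [A.ftc x hx, A.ftc y hy, ← Ioc_union_Ioc_eq_Ioc hx.1 hxy.le,
    setIntegral_union (Ioc_disjoint_Ioc_of_le le_rfl) measurableSet_Ioc
      (A.intg.mono_set (Ioc_subset_Ioc_right hx.2))
      (A.intg.mono_set (Ioc_subset_Ioc hx.1 hy.2))]
  have hsub : Ioc x y ⊆ Ioc ε 1 := Ioc_subset_Ioc hx.1 hy.2
  have hae : ∀ᵐ t ∂(volume.restrict (Ioc x y)), 0 < v' t :=
    ae_restrict_of_ae_restrict_of_subset hsub A.derivPos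
  have hint : 0 < ∫ t in Ioc x y, v' t := by
    refine (integral_nonneg_of_ae (hae.mono fun _ h => h.le)).lt_of_ne' fun h0 => ?_
    rw [integral_eq_zero_iff_of_nonneg_ae (hae.mono fun _ h => h.le) (A.intg.mono_set hsub)] at h0
    have hnull : ∀ᵐ _ ∂(volume.restrict (Ioc x y)), False := by
      filter_upwards [h0, hae] with t ht ht' using ht'.ne' ht
    rw [eventually_false_iff_eq_bot, ae_eq_bot, Measure.restrict_eq_zero, Real.volume_Ioc,
      ENNReal.ofReal_eq_zero] at hnull
    linarith
  linarith

lemma nonneg (A : AdmE ε lam v v') {x : ℝ} (hx : x ∈ Icc ε 1) : 0 ≤ v x :=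
  A.c0.trans (A.strictMonoOn.monotoneOn ⟨le_rfl, hx.1.trans hx.2⟩ hx hx.1)

lemma pos (A : AdmE ε lam v v') {x : ℝ} (hx : x ∈ Ioc ε 1) : 0 < v x :=
  A.c0.trans_lt (A.strictMonoOn ⟨le_rfl, hx.1.le.trans hx.2⟩ (Ioc_subset_Icc_self hx) hx.1)

lemma ae_pos (A : AdmE ε lam v v') :
    ∀ᵐ R ∂(volume.restrict (Ioc ε 1)), R ∈ Icc ε 1 ∧ 0 < v R ∧ 0 < v' R := by
  filter_upwards [A.derivPos, ae_restrict_mem measurableSet_Ioc] with R hR hRI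
  exact ⟨Ioc_subset_Icc_self hRI, A.pos hRI, hR⟩

end AdmE

end Admissible

section Calibration

/-- A smooth positive solution `U` of the modified equilibrium equation on `[ε, 1]` with derivative
`ρ`, in the first-order form with `q = κ (R ρ / U)^(n-1) + h' (ρ (U / R)^(n-1))`. -/
structure Extremal (n : ℕ) (κ : ℝ) (h' : ℝ → ℝ) (ε : ℝ) (U ρ q : ℝ → ℝ) : Prop where
  pos : ∀ R ∈ Icc ε 1, 0 < U R
  deriv_pos : ∀ R ∈ Icc ε 1, 0 < ρ R
  hasDeriv : ∀ R ∈ Icc ε 1, HasDerivWithinAt U (ρ R) (Icc ε 1) R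
  continuousOn_deriv : ContinuousOn ρ (Icc ε 1)
  hasDeriv_q : ∀ R ∈ Icc ε 1,
    HasDerivWithinAt q (κ * ((n : ℝ) - 1) / R * (1 - (R * ρ R / U R) ^ n)) (Icc ε 1) R
  q_eq : ∀ R ∈ Icc ε 1, q R = κ * (R * ρ R / U R) ^ (n - 1) + h' (del n U ρ R)

/-- The integrand of the modified energy. -/
def energyDensity (n : ℕ) (κ : ℝ) (h v v' : ℝ → ℝ) (R : ℝ) : ℝ :=
  R ^ (n - 1) * PhiHat n κ h (v' R) (v R / R)

/-- The calibration function, whose total derivative is the null Lagrangian attached to an extremal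
with stress `q`. -/
def calib (n : ℕ) (κ : ℝ) (q v : ℝ → ℝ) (R : ℝ) : ℝ :=
  1 / n * (q R * v R ^ n) + κ * ((n : ℝ) - 1) / n * (v R ^ n * log (v R) - v R ^ n * log R)

/-- The derivative of `calib n κ q v` when `q` and `v` have derivatives `q'` and `v'`. -/
def calibDeriv (n : ℕ) (κ : ℝ) (q q' v v' : ℝ → ℝ) (R : ℝ) : ℝ :=
  1 / n * (q' R * v R ^ n + q R * (n * v R ^ (n - 1) * v' R)) +
    κ * ((n : ℝ) - 1) / n * (v R ^ (n - 2) * (n * (v R * log (v R)) + v R) * v' R -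
      (n * v R ^ (n - 1) * v' R * log R + v R ^ n * R⁻¹))

namespace Extremal

/-- The right-hand side of the equation for `q`. -/
def qDeriv (n : ℕ) (κ : ℝ) (U ρ : ℝ → ℝ) (R : ℝ) : ℝ :=
  κ * ((n : ℝ) - 1) / R * (1 - (R * ρ R / U R) ^ n)

/-- The part of the calibrated energy density that does not depend on the competitor. -/
def rest (n : ℕ) (h h' U ρ : ℝ → ℝ) (R : ℝ) : ℝ :=
  R ^ (n - 1) * (h (del n U ρ R) - h' (del n U ρ R) * del n U ρ R)

/-- The Weierstrass excess of a competitor `v` over the extremal `U`. -/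
def excess (n : ℕ) (κ : ℝ) (h h' U ρ v v' : ℝ → ℝ) (R : ℝ) : ℝ :=
  κ / n / R * ((R * v' R) ^ n + ((n : ℝ) - 1) * (R * ρ R / U R * v R) ^ n -
      n * (R * v' R) * (R * ρ R / U R * v R) ^ (n - 1)) +
    R ^ (n - 1) * (h (del n v v' R) -
      (h (del n U ρ R) + h' (del n U ρ R) * (del n v v' R - del n U ρ R)))

end Extremal

variable {n : ℕ} {κ ε lam : ℝ} {h h' h'' U ρ q v v' : ℝ → ℝ}

lemma del_pos {R : ℝ} (hR : 0 < R) (hv : 0 < v R) (hv' : 0 < v' R) : 0 < del n v v' R :=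
  mul_pos hv' (pow_pos (div_pos hv hR) _)

lemma GoodH.strictConvexOn (hh : GoodH h h' h'') : StrictConvexOn ℝ (Ioi 0) h := by
  refine StrictMonoOn.strictConvexOn_of_deriv (convex_Ioi 0)
    (fun d hd => (hh.deriv1 d hd).continuousAt.continuousWithinAt) ?_
  rw [interior_Ioi]
  exact hh.deriv_strictMonoOn.congr fun d hd => (hh.deriv1 d hd).deriv.symm

lemma GoodH.add_deriv_mul_sub_lt (hh : GoodH h h' h'') {x y : ℝ} (hx : 0 < x) (hy : 0 < y)
    (hxy : x ≠ y) : h y + h' y * (x - y) < h x := by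
  rcases hxy.lt_or_gt with hlt | hlt
  · have := hh.strictConvexOn.slope_lt_of_hasDerivAt hx hy hlt (hh.deriv1 y hy)
    rw [slope_def_field, div_lt_iff₀ (sub_pos.2 hlt)] at this
    linarith
  · have := hh.strictConvexOn.lt_slope_of_hasDerivAt hy hx hlt (hh.deriv1 y hy)
    rw [slope_def_field, lt_div_iff₀ (sub_pos.2 hlt)] at this
    linarith

lemma AdmE.setIntegral_del (hε : 0 < ε) (A : AdmE ε lam v v') {X : ℝ} (hX : X ∈ Icc ε 1) :
    ∫ R in Ioc ε X, n * (R ^ (n - 1) * del n v v' R) = v X ^ n - v ε ^ n := by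
  have hε1 := hX.1.trans hX.2
  have hsub : uIcc ε X ⊆ uIcc ε 1 := by
    rw [uIcc_of_le hX.1, uIcc_of_le hε1]
    exact Icc_subset_Icc_right hX.2
  have hac := absolutelyContinuousOnInterval_comp_of_hasDerivAt (fun t => hasDerivAt_pow n t)
    (by fun_prop) ((A.absolutelyContinuousOnInterval hε1).mono hsub)
  refine (integrableOn_and_setIntegral_eq_sub_of_absolutelyContinuousOnInterval hX.1 hac ?_).2
  filter_upwards [ae_restrict_of_ae_restrict_of_subset (Ioc_subset_Ioc_right hX.2)
    (A.ae_hasDerivAt hε1), ae_restrict_mem measurableSet_Ioc] with R hR hRI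
  refine (hR.pow n).congr_deriv ?_
  have hR0 : R ≠ 0 := (hε.trans hRI.1).ne'
  rw [del, div_pow]
  field_simp

lemma AdmE.eqOn_of_del_ae_eq (hn : n ≠ 0) (hε : 0 < ε) {lam' : ℝ} (A : AdmE ε lam v v')
    (B : AdmE ε lam' U ρ) (hin : v ε = U ε)
    (hdel : ∀ᵐ R ∂(volume.restrict (Ioc ε 1)), del n v v' R = del n U ρ R) :
    EqOn v U (Icc ε 1) := by
  intro X hX
  have hint : ∫ R in Ioc ε X, n * (R ^ (n - 1) * del n v v' R) =
      ∫ R in Ioc ε X, n * (R ^ (n - 1) * del n U ρ R) := by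
    refine integral_congr_ae ?_
    filter_upwards [ae_restrict_of_ae_restrict_of_subset (Ioc_subset_Ioc_right hX.2) hdel]
      with R hR
    rw [hR]
  rw [A.setIntegral_del hε hX, B.setIntegral_del hε hX, hin] at hint
  exact (pow_left_inj₀ (A.nonneg hX) (B.nonneg hX) hn).1 (sub_left_injective hint)

namespace Extremal

lemma energyDensity_eq (hn : 2 ≤ n) (hε : 0 < ε) (E : Extremal n κ h' ε U ρ q) {R : ℝ}
    (hR : R ∈ Icc ε 1) (hv : 0 < v R) :
    energyDensity n κ h v v' R = calibDeriv n κ q (qDeriv n κ U ρ) v v' R + rest n h h' U ρ R +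
      excess n κ h h' U ρ v v' R := by
  have hR0 := hε.trans_le hR.1
  obtain ⟨m, rfl⟩ := Nat.exists_eq_add_of_le' hn
  have e₁ : m + 2 - 1 = m + 1 := rfl
  have e₂ : m + 2 - 2 = m := rfl
  have hn0 : ((m + 2 : ℕ) : ℝ) ≠ 0 := by positivity
  simp only [energyDensity, calibDeriv, PhiHat, qDeriv, rest, excess, E.q_eq R hR,
    log_div hv.ne' hR0.ne']
  rw [← del]
  generalize del (m + 2) U ρ R = d
  generalize R * ρ R / U R = P
  simp only [del, e₁, e₂, div_pow, mul_pow, pow_succ]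
  field_simp
  ring

lemma excess_nonneg (hn : n ≠ 0) (hκ : 0 < κ) (hh : GoodH h h' h'') (hε : 0 < ε)
    (E : Extremal n κ h' ε U ρ q) {R : ℝ} (hR : R ∈ Icc ε 1) (hv : 0 < v R) (hv' : 0 < v' R) :
    0 ≤ excess n κ h h' U ρ v v' R ∧
      (excess n κ h h' U ρ v v' R = 0 → del n v v' R = del n U ρ R) := by
  have hR0 := hε.trans_le hR.1
  have hU := E.pos R hR
  have hρ := E.deriv_pos R hR
  have hamgm := nat_mul_mul_pow_pred_le hn (x := R * v' R) (y := R * ρ R / U R * v R)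
    (by positivity) (by positivity)
  have hfst : 0 ≤ κ / n / R * ((R * v' R) ^ n + ((n : ℝ) - 1) * (R * ρ R / U R * v R) ^ n -
      n * (R * v' R) * (R * ρ R / U R * v R) ^ (n - 1)) :=
    mul_nonneg (by positivity) (by linarith)
  by_cases hdel : del n v v' R = del n U ρ R
  · refine ⟨add_nonneg hfst ?_, fun _ => hdel⟩
    rw [hdel, sub_self, mul_zero, add_zero, sub_self, mul_zero]
  · have hpos : 0 < excess n κ h h' U ρ v v' R :=
      add_pos_of_nonneg_of_pos hfst (mul_pos (pow_pos hR0 _)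
        (sub_pos.2 (hh.add_deriv_mul_sub_lt (del_pos hR0 hv hv') (del_pos hR0 hU hρ) hdel)))
    exact ⟨hpos.le, fun h0 => absurd h0 hpos.ne'⟩

lemma excess_self (hn : n ≠ 0) (E : Extremal n κ h' ε U ρ q) {R : ℝ} (hR : R ∈ Icc ε 1) :
    excess n κ h h' U ρ U ρ R = 0 := by
  rw [excess, div_mul_cancel₀ _ (E.pos R hR).ne', ← mul_pow_sub_one hn (R * ρ R)]
  ring

lemma continuousOn (E : Extremal n κ h' ε U ρ q) : ContinuousOn U (Icc ε 1) :=
  fun R hR => (E.hasDeriv R hR).continuousWithinAt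

lemma continuousOn_qDeriv (hε : 0 < ε) (E : Extremal n κ h' ε U ρ q) :
    ContinuousOn (qDeriv n κ U ρ) (Icc ε 1) :=
  (continuousOn_const.div continuousOn_id fun _ hR => (hε.trans_le hR.1).ne').mul
    (continuousOn_const.sub (((continuousOn_id.mul E.continuousOn_deriv).div E.continuousOn
      fun R hR => (E.pos R hR).ne').pow n))

lemma integrableOn_rest (hε : 0 < ε) (hh : GoodH h h' h'') (E : Extremal n κ h' ε U ρ q) :
    IntegrableOn (rest n h h' U ρ) (Ioc ε 1) := by
  have hdel : ContinuousOn (del n U ρ) (Icc ε 1) :=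
    E.continuousOn_deriv.mul ((E.continuousOn.div continuousOn_id fun R hR =>
      (hε.trans_le hR.1).ne').pow _)
  have hpos : MapsTo (del n U ρ) (Icc ε 1) (Ioi 0) := fun R hR =>
    del_pos (hε.trans_le hR.1) (E.pos R hR) (E.deriv_pos R hR)
  have hrest : ContinuousOn (rest n h h' U ρ) (Icc ε 1) :=
    (continuousOn_id.pow _).mul ((hh.strictConvexOn.convexOn.continuousOn isOpen_Ioi |>.comp hdel
      hpos).sub ((hh.continuousOn_deriv.comp hdel hpos).mul hdel))
  exact (hrest.integrableOn_compact isCompact_Icc).mono_set Ioc_subset_Icc_self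

lemma admE (hε : ε ≤ 1) (E : Extremal n κ h' ε U ρ q) : AdmE ε (U 1) U ρ where
  intg := (E.continuousOn_deriv.integrableOn_compact isCompact_Icc).mono_set Ioc_subset_Icc_self
  ftc R hR := by
    have := intervalIntegral.integral_eq_sub_of_hasDeriv_right_of_le hR.1
      (E.continuousOn.mono (Icc_subset_Icc_right hR.2)) (f' := ρ)
      (fun x hx => ((E.hasDeriv x ⟨hx.1.le, hx.2.le.trans hR.2⟩).hasDerivAt
        (Icc_mem_nhds hx.1 (hx.2.trans_le hR.2))).hasDerivWithinAt)
      ((intervalIntegrable_iff_integrableOn_Ioc_of_le hR.1).2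
        ((E.continuousOn_deriv.integrableOn_compact isCompact_Icc).mono_set
          (Ioc_subset_Icc_self.trans (Icc_subset_Icc_right hR.2))))
    rw [intervalIntegral.integral_of_le hR.1] at this
    linarith
  derivPos := (ae_restrict_iff' measurableSet_Ioc).2
    (Eventually.of_forall fun R hR => E.deriv_pos R (Ioc_subset_Icc_self hR))
  bc := rfl
  c0 := (E.pos ε ⟨le_rfl, hε⟩).le

lemma ae_hasDerivAt_calib (hn : 2 ≤ n) (hε : 0 < ε) (hε1 : ε ≤ 1) (E : Extremal n κ h' ε U ρ q)
    (A : AdmE ε lam v v') :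
    ∀ᵐ R ∂(volume.restrict (Ioc ε 1)),
      HasDerivAt (calib n κ q v) (calibDeriv n κ q (qDeriv n κ U ρ) v v' R) R := by
  have hne : ∀ᵐ R ∂(volume.restrict (Ioc ε 1)), R ≠ 1 := ae_restrict_of_ae (by simp [ae_iff])
  filter_upwards [A.ae_hasDerivAt hε1, hne, ae_restrict_mem measurableSet_Ioc] with R hv hR1 hR
  have hq := (E.hasDeriv_q R (Ioc_subset_Icc_self hR)).hasDerivAt
    (Icc_mem_nhds hR.1 (lt_of_le_of_ne hR.2 hR1))
  have hpow : HasDerivAt (fun R => v R ^ n) (n * v R ^ (n - 1) * v' R) R := hv.pow n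
  have hpowlog := (hasDerivAt_pow_mul_log hn (v R)).comp R hv
  exact ((hq.mul hpow).const_mul (1 / (n : ℝ))).add
    ((hpowlog.sub (hpow.mul (hasDerivAt_log (hε.trans hR.1).ne'))).const_mul
      (κ * ((n : ℝ) - 1) / n))

lemma integrableOn_calibDeriv (hn : 2 ≤ n) (hε : 0 < ε) (hε1 : ε ≤ 1)
    (E : Extremal n κ h' ε U ρ q) (A : AdmE ε lam v v') :
    IntegrableOn (calibDeriv n κ q (qDeriv n κ U ρ) v v') (Ioc ε 1) ∧
      ∫ R in Ioc ε 1, calibDeriv n κ q (qDeriv n κ U ρ) v v' R =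
        calib n κ q v 1 - calib n κ q v ε := by
  have hv := A.absolutelyContinuousOnInterval hε1
  have hq := absolutelyContinuousOnInterval_of_hasDerivWithinAt hε1 E.hasDeriv_q
    (E.continuousOn_qDeriv hε)
  have hlog := absolutelyContinuousOnInterval_of_hasDerivWithinAt hε1
    (fun x hx => (hasDerivAt_log (hε.trans_le hx.1).ne').hasDerivWithinAt)
    (continuousOn_id.inv₀ fun x hx => (hε.trans_le hx.1).ne')
  have hpow := absolutelyContinuousOnInterval_comp_of_hasDerivAt (fun t => hasDerivAt_pow n t)
    (by fun_prop) hv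
  have hpowlog := absolutelyContinuousOnInterval_comp_of_hasDerivAt (hasDerivAt_pow_mul_log hn)
    (continuous_pow_mul_log_deriv n) hv
  exact integrableOn_and_setIntegral_eq_sub_of_absolutelyContinuousOnInterval hε1
    (((hq.mul hpow).const_mul (1 / (n : ℝ))).add
      ((hpowlog.sub (hpow.mul hlog)).const_mul (κ * ((n : ℝ) - 1) / n)))
    (E.ae_hasDerivAt_calib hn hε hε1 A)

lemma integrableOn_self (hn : 2 ≤ n) (hh : GoodH h h' h'') (hε : 0 < ε) (hε1 : ε ≤ 1)
    (E : Extremal n κ h' ε U ρ q) : IntegrableOn (energyDensity n κ h U ρ) (Ioc ε 1) := by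
  refine (integrableOn_congr_fun (fun R hR => ?_) measurableSet_Ioc).2
    ((E.integrableOn_calibDeriv hn hε hε1 (E.admE hε1)).1.add (E.integrableOn_rest hε hh))
  have hR' := Ioc_subset_Icc_self hR
  rw [E.energyDensity_eq hn hε hR' (E.pos R hR'), E.excess_self (by omega) hR', add_zero]
  rfl

lemma integral_energyDensity_eq (hn : 2 ≤ n) (hh : GoodH h h' h'') (hε : 0 < ε) (hε1 : ε ≤ 1)
    (E : Extremal n κ h' ε U ρ q) (A : AdmE ε lam v v')
    (hint : IntegrableOn (energyDensity n κ h v v') (Ioc ε 1)) :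
    IntegrableOn (excess n κ h h' U ρ v v') (Ioc ε 1) ∧
      ∫ R in Ioc ε 1, energyDensity n κ h v v' R =
        calib n κ q v 1 - calib n κ q v ε + (∫ R in Ioc ε 1, rest n h h' U ρ R) +
          ∫ R in Ioc ε 1, excess n κ h h' U ρ v v' R := by
  obtain ⟨hcal, hcal_eq⟩ := E.integrableOn_calibDeriv hn hε hε1 A
  have hrest := E.integrableOn_rest hε hh
  have hsplit : ∀ᵐ R ∂(volume.restrict (Ioc ε 1)), energyDensity n κ h v v' R =
      calibDeriv n κ q (qDeriv n κ U ρ) v v' R + rest n h h' U ρ R +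
        excess n κ h h' U ρ v v' R := by
    filter_upwards [A.ae_pos] with R hR using E.energyDensity_eq hn hε hR.1 hR.2.1
  have hexc : IntegrableOn (excess n κ h h' U ρ v v') (Ioc ε 1) := by
    refine (hint.sub (hcal.add hrest)).congr ?_
    filter_upwards [hsplit] with R hR
    simp only [Pi.sub_apply, Pi.add_apply, hR, add_sub_cancel_left]
  have hsum : IntegrableOn (fun R => calibDeriv n κ q (qDeriv n κ U ρ) v v' R +
      rest n h h' U ρ R) (Ioc ε 1) := hcal.add hrest
  refine ⟨hexc, ?_⟩
  rw [integral_congr_ae hsplit, integral_add hsum hexc, integral_add hcal hrest, hcal_eq]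

lemma integral_sub_integral_eq (hn : 2 ≤ n) (hh : GoodH h h' h'') (hε : 0 < ε) (hε1 : ε ≤ 1)
    (E : Extremal n κ h' ε U ρ q) (A : AdmE ε (U 1) v v')
    (hint : IntegrableOn (energyDensity n κ h v v') (Ioc ε 1)) :
    (∫ R in Ioc ε 1, energyDensity n κ h v v' R) - ∫ R in Ioc ε 1, energyDensity n κ h U ρ R =
      calib n κ q U ε - calib n κ q v ε + ∫ R in Ioc ε 1, excess n κ h h' U ρ v v' R := by
  have hself : ∫ R in Ioc ε 1, excess n κ h h' U ρ U ρ R = 0 := by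
    rw [setIntegral_congr_fun measurableSet_Ioc fun R hR =>
      E.excess_self (by omega) (Ioc_subset_Icc_self hR), integral_zero]
  have hone : calib n κ q v 1 = calib n κ q U 1 := by rw [calib, calib, A.bc]
  rw [(E.integral_energyDensity_eq hn hh hε hε1 A hint).2, (E.integral_energyDensity_eq hn hh hε
    hε1 (E.admE hε1) (E.integrableOn_self hn hh hε hε1)).2, hself, hone]
  ring

lemma ae_excess_nonneg (hn : n ≠ 0) (hκ : 0 < κ) (hh : GoodH h h' h'') (hε : 0 < ε)
    (E : Extremal n κ h' ε U ρ q) (A : AdmE ε lam v v') :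
    0 ≤ᵐ[volume.restrict (Ioc ε 1)] excess n κ h h' U ρ v v' := by
  filter_upwards [A.ae_pos] with R hR using (E.excess_nonneg hn hκ hh hε hR.1 hR.2.1 hR.2.2).1

lemma calib_sub_calib_le (hn : 2 ≤ n) (hκ : 0 < κ) (hh : GoodH h h' h'') (hε : 0 < ε)
    (hε1 : ε ≤ 1) (E : Extremal n κ h' ε U ρ q) (A : AdmE ε (U 1) v v')
    (hint : IntegrableOn (energyDensity n κ h v v') (Ioc ε 1)) :
    calib n κ q U ε - calib n κ q v ε ≤
      (∫ R in Ioc ε 1, energyDensity n κ h v v' R) -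
        ∫ R in Ioc ε 1, energyDensity n κ h U ρ R := by
  rw [E.integral_sub_integral_eq hn hh hε hε1 A hint]
  exact le_add_of_nonneg_right
    (integral_nonneg_of_ae (E.ae_excess_nonneg (by omega) hκ hh hε A))

lemma eqOn_of_integral_le (hn : 2 ≤ n) (hκ : 0 < κ) (hh : GoodH h h' h'') (hε : 0 < ε)
    (hε1 : ε ≤ 1) (E : Extremal n κ h' ε U ρ q) (A : AdmE ε (U 1) v v')
    (hint : IntegrableOn (energyDensity n κ h v v') (Ioc ε 1)) (hin : v ε = U ε)
    (hle : ∫ R in Ioc ε 1, energyDensity n κ h v v' R ≤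
      ∫ R in Ioc ε 1, energyDensity n κ h U ρ R) : EqOn v U (Icc ε 1) := by
  have hn0 : n ≠ 0 := by omega
  have hnn := E.ae_excess_nonneg hn0 hκ hh hε A
  have heq := E.integral_sub_integral_eq hn hh hε hε1 A hint
  have hcal : calib n κ q U ε = calib n κ q v ε := by rw [calib, calib, hin]
  have hzero : ∫ R in Ioc ε 1, excess n κ h h' U ρ v v' R = 0 :=
    le_antisymm (by linarith) (integral_nonneg_of_ae hnn)
  rw [integral_eq_zero_iff_of_nonneg_ae hnn
    (E.integral_energyDensity_eq hn hh hε hε1 A hint).1] at hzero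
  refine A.eqOn_of_del_ae_eq hn0 hε (E.admE hε1) hin ?_
  filter_upwards [A.ae_pos, hzero] with R hR h0
    using (E.excess_nonneg hn0 hκ hh hε hR.1 hR.2.1 hR.2.2).2 h0

end Extremal

end Calibration

section Functional

variable {n : ℕ} {κ ε lam : ℝ} {h h' h'' U ρ q v v' : ℝ → ℝ}

lemma lintegral_ofReal_eq_top_of_not_integrable {α : Type*} {m : MeasurableSpace α} {μ : Measure α}
    {f g : α → ℝ} (hf : AEStronglyMeasurable f μ) (hg : Integrable g μ) (hgf : g ≤ᵐ[μ] f)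
    (hnf : ¬Integrable f μ) : ∫⁻ x, ENNReal.ofReal (f x) ∂μ = ⊤ := by
  by_contra hfin
  have hsub : Integrable (f - g) μ := by
    refine ⟨hf.sub hg.1, (hasFiniteIntegral_iff_ofReal ?_).2 ?_⟩
    · filter_upwards [hgf] with x hx using sub_nonneg.2 hx
    calc ∫⁻ x, ENNReal.ofReal ((f - g) x) ∂μ
        ≤ ∫⁻ x, (ENNReal.ofReal (f x) + ENNReal.ofReal (-g x)) ∂μ :=
          lintegral_mono fun x => by
            rw [Pi.sub_apply, sub_eq_add_neg]
            exact ENNReal.ofReal_add_le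
      _ = ∫⁻ x, ENNReal.ofReal (f x) ∂μ + ∫⁻ x, ENNReal.ofReal (-g x) ∂μ :=
          lintegral_add_left' hf.aemeasurable.ennreal_ofReal _
      _ < ⊤ := ENNReal.add_lt_top.2 ⟨lt_top_iff_ne_top.2 hfin, hg.neg.lintegral_lt_top⟩
  exact hnf (by simpa only [sub_add_cancel] using hsub.add hg)

lemma GoodH.measurable_indicator (hh : GoodH h h' h'') :
    Measurable ((Ioi (0 : ℝ)).indicator h) := by
  classical
  rw [← piecewise_eq_indicator]
  exact (hh.strictConvexOn.convexOn.continuousOn isOpen_Ioi).measurable_piecewise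
    continuousOn_const measurableSet_Ioi

lemma AdmE.aestronglyMeasurable_energyDensity (hh : GoodH h h' h'') (hε : 0 < ε) (hε1 : ε ≤ 1)
    (A : AdmE ε lam v v') :
    AEStronglyMeasurable (energyDensity n κ h v v') (volume.restrict (Ioc ε 1)) := by
  have hv : AEMeasurable v (volume.restrict (Ioc ε 1)) :=
    ((A.continuousOn hε1).mono Ioc_subset_Icc_self).aemeasurable measurableSet_Ioc
  have hv' : AEMeasurable v' (volume.restrict (Ioc ε 1)) := A.intg.aemeasurable
  have hquot : AEMeasurable (fun R => v R / R) (volume.restrict (Ioc ε 1)) :=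
    hv.div aemeasurable_id
  have hdel : AEMeasurable (del n v v') (volume.restrict (Ioc ε 1)) :=
    hv'.mul (hquot.pow_const _)
  have hlog : AEMeasurable (fun R => log (v R / R)) (volume.restrict (Ioc ε 1)) :=
    measurable_log.comp_aemeasurable hquot
  have hind := hh.measurable_indicator.comp_aemeasurable hdel
  refine (AEMeasurable.congr (f := fun R => R ^ (n - 1) * ((κ / n) * v' R ^ n +
    (Ioi (0 : ℝ)).indicator h (del n v v' R) + κ * del n v v' R *
      (((n : ℝ) - 1) / n + ((n : ℝ) - 1) * log (v R / R)))) ?_ ?_).aestronglyMeasurable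
  · exact (aemeasurable_id.pow_const _).mul ((((hv'.pow_const _).const_mul _).add hind).add
      ((hdel.const_mul _).mul ((hlog.const_mul _).const_add _)))
  · filter_upwards [A.ae_pos] with R ⟨hR, hvR, hvR'⟩
    rw [indicator_of_mem (mem_Ioi.2 (del_pos (hε.trans_le hR.1) hvR hvR'))]
    rfl

lemma IHatEps_of_integrableOn (hint : IntegrableOn (energyDensity n κ h v v') (Ioc ε 1)) :
    IHatEps n κ ε lam h v v' = ((∫ R in Ioc ε 1, energyDensity n κ h v v' R) -
      κ * ((n : ℝ) - 1) / n * lam ^ n * log lam : ℝ) := by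
  have hpos := hint.lintegral_lt_top
  have hneg : ∫⁻ R in Ioc ε 1, ENNReal.ofReal (-energyDensity n κ h v v' R) < ⊤ :=
    hint.neg.lintegral_lt_top
  rw [integral_eq_lintegral_pos_part_sub_lintegral_neg_part hint, EReal.coe_sub, EReal.coe_sub,
    EReal.coe_ennreal_toReal hpos.ne, EReal.coe_ennreal_toReal hneg.ne]
  rfl

lemma Extremal.IHatEps_of_not_integrableOn (hn : 2 ≤ n) (hκ : 0 < κ) (hh : GoodH h h' h'')
    (hε : 0 < ε) (hε1 : ε ≤ 1) (E : Extremal n κ h' ε U ρ q) (A : AdmE ε lam v v')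
    (hint : ¬IntegrableOn (energyDensity n κ h v v') (Ioc ε 1)) :
    IHatEps n κ ε lam h v v' = ⊤ := by
  have hlow := (E.integrableOn_calibDeriv hn hε hε1 A).1.add (E.integrableOn_rest hε hh)
  have hle : calibDeriv n κ q (qDeriv n κ U ρ) v v' + rest n h h' U ρ
      ≤ᵐ[volume.restrict (Ioc ε 1)] energyDensity n κ h v v' := by
    filter_upwards [A.ae_pos] with R ⟨hR, hvR, hvR'⟩
    rw [E.energyDensity_eq hn hε hR hvR]
    exact le_add_of_nonneg_right (E.excess_nonneg (by omega) hκ hh hε hR hvR hvR').1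
  have hneg : ∫⁻ R in Ioc ε 1, ENNReal.ofReal (-energyDensity n κ h v v' R) ≠ ⊤ := by
    refine ((lintegral_mono_ae ?_).trans_lt hlow.neg.lintegral_lt_top).ne
    filter_upwards [hle] with R hR using ENNReal.ofReal_le_ofReal (neg_le_neg hR)
  have hpos := lintegral_ofReal_eq_top_of_not_integrable
    (A.aestronglyMeasurable_energyDensity hh hε hε1) hlow hle hint
  change ((∫⁻ R in Ioc ε 1, ENNReal.ofReal (energyDensity n κ h v v' R) : ℝ≥0∞) : EReal) -
    ((∫⁻ R in Ioc ε 1, ENNReal.ofReal (-energyDensity n κ h v v' R) : ℝ≥0∞) : EReal) - _ = ⊤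
  rw [hpos, ← EReal.coe_ennreal_toReal hneg, EReal.coe_ennreal_top, EReal.top_sub_coe,
    EReal.top_sub_coe]

end Functional

section Subgradient

open scoped Topology

lemma lt_of_frequently_lt_right {f : ℝ → ℝ} {a b : ℝ} (hab : a < b) (hf : ContinuousOn f (Icc a b))
    (hinc : ∀ x ∈ Ico a b, ∃ᶠ y in 𝓝[>] x, f x < f y) : f a < f b := by
  obtain ⟨c, hc, hmax⟩ := isCompact_Icc.exists_isMaxOn (nonempty_Icc.2 hab.le) hf
  have hexists : ∀ x ∈ Ico a b, ∃ y ∈ Ioo x b, f x < f y := fun x hx =>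
    ((hinc x hx).and_eventually (Ioo_mem_nhdsGT hx.2)).exists.imp fun _ hy => ⟨hy.2, hy.1⟩
  obtain rfl : c = b := by
    refine hc.2.eq_or_lt.resolve_right fun hcb => ?_
    obtain ⟨y, hy, hlt⟩ := hexists c ⟨hc.1, hcb⟩
    exact hlt.not_ge (hmax ⟨hc.1.trans hy.1.le, hy.2.le⟩)
  obtain ⟨y, hy, hlt⟩ := hexists a ⟨le_rfl, hab⟩
  exact hlt.trans_le (hmax (Ioo_subset_Icc_self hy))

lemma lt_of_frequently_lt_right_of_Ioo {f : ℝ → ℝ} {a b : ℝ} (hab : a < b)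
    (hf : ContinuousOn f (Icc a b)) (hinc : ∀ x ∈ Ioo a b, ∃ᶠ y in 𝓝[>] x, f x < f y) :
    f a < f b := by
  have hmono : ∀ x ∈ Ioo a b, ∀ y ∈ Ioc x b, f x < f y := fun x hx y hy =>
    lt_of_frequently_lt_right hy.1 (hf.mono (Icc_subset_Icc hx.1.le hy.2)) fun z hz =>
      hinc z ⟨hx.1.trans_le hz.1, hz.2.trans_le hy.2⟩
  obtain ⟨c, hac, hcb⟩ := exists_between hab
  have hlim : Tendsto f (𝓝[>] a) (𝓝 (f a)) :=
    (hf a ⟨le_rfl, hab.le⟩).tendsto.mono_left (nhdsWithin_le_of_mem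
      (mem_of_superset (Ioo_mem_nhdsGT hab) Ioo_subset_Icc_self))
  have hle : f a ≤ f c := by
    refine le_of_tendsto hlim ?_
    filter_upwards [Ioo_mem_nhdsGT hac] with x hx
    exact (hmono x ⟨hx.1, hx.2.trans hcb⟩ c ⟨hx.2, hcb.le⟩).le
  exact hle.trans_lt (hmono c ⟨hac, hcb⟩ b ⟨hcb, le_rfl⟩)

lemma convexOn_of_subgradient {E : Type*} [AddCommGroup E] [Module ℝ E] {s : Set E} {m : E → ℝ}
    (σ : E → E →ₗ[ℝ] ℝ) (hs : Convex ℝ s)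
    (hsub : ∀ x ∈ s, ∀ y ∈ s, m x + σ x (y - x) ≤ m y) : ConvexOn ℝ s m := by
  refine ⟨hs, fun x hx y hy a b ha hb hab => ?_⟩
  set z := a • x + b • y with hz
  have hzs : z ∈ s := hs hx hy ha hb hab
  have hbary : a * σ z (x - z) + b * σ z (y - z) = 0 := by
    rw [← smul_eq_mul, ← smul_eq_mul, ← map_smul, ← map_smul, ← map_add, smul_sub, smul_sub,
      sub_add_sub_comm, ← hz, ← add_smul, hab, one_smul, sub_self, map_zero]
  calc m z = a * (m z + σ z (x - z)) + b * (m z + σ z (y - z)) := by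
        linear_combination -hbary - m z * hab
    _ ≤ a • m x + b • m y :=
        add_le_add (mul_le_mul_of_nonneg_left (hsub z hzs x hx) ha)
          (mul_le_mul_of_nonneg_left (hsub z hzs y hy) hb)

variable {s : Set ℝ} {m σ ψ ψ' : ℝ → ℝ} {a b : ℝ}

lemma eventually_add_lt_add_of_subgradient {x : ℝ} (hs : s ∈ 𝓝 x)
    (hsub : ∀ y ∈ s, m x + σ x * (y - x) ≤ m y) (hψ : HasDerivAt ψ (ψ' x) x)
    (hpos : 0 < σ x + ψ' x) : ∀ᶠ y in 𝓝[>] x, m x + ψ x < m y + ψ y := by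
  have hderiv : HasDerivWithinAt (fun y => σ x * y + ψ y) (σ x + ψ' x) (Ioi x) x :=
    (((hasDerivAt_id x).const_mul (σ x)).add hψ |>.congr_deriv (by rw [mul_one])).hasDerivWithinAt
  have hslope := (hasDerivWithinAt_iff_tendsto_slope' self_notMem_Ioi).1 hderiv
  filter_upwards [hslope.eventually (lt_mem_nhds hpos), self_mem_nhdsWithin,
    mem_nhdsWithin_of_mem_nhds hs] with y hy hxy hys
  rw [slope_def_field, div_pos_iff_of_pos_right (sub_pos.2 hxy)] at hy
  linarith [hsub y hys]

lemma continuousOn_add_of_subgradient (hs : IsOpen s) (hc : Convex ℝ s)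
    (hsub : ∀ x ∈ s, ∀ y ∈ s, m x + σ x * (y - x) ≤ m y)
    (hψ : ∀ x ∈ s, HasDerivAt ψ (ψ' x) x) : ContinuousOn (fun x => m x + ψ x) s :=
  ((convexOn_of_subgradient (fun x => LinearMap.mulLeft ℝ (σ x)) hc hsub).continuousOn hs).add
    fun x hx => (hψ x hx).continuousAt.continuousWithinAt

lemma add_lt_add_of_subgradient_pos (hs : IsOpen s) (hc : Convex ℝ s)
    (hsub : ∀ x ∈ s, ∀ y ∈ s, m x + σ x * (y - x) ≤ m y)
    (hψ : ∀ x ∈ s, HasDerivAt ψ (ψ' x) x) (ha : a ∈ s) (hb : b ∈ s) (hab : a < b)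
    (hpos : ∀ x ∈ Ioo a b, 0 < σ x + ψ' x) : m a + ψ a < m b + ψ b := by
  have hIcc : Icc a b ⊆ s := hc.ordConnected.out ha hb
  refine lt_of_frequently_lt_right_of_Ioo (f := fun x => m x + ψ x) hab
    ((continuousOn_add_of_subgradient hs hc hsub hψ).mono hIcc) fun x hx => ?_
  have hxs := hIcc (Ioo_subset_Icc_self hx)
  exact (eventually_add_lt_add_of_subgradient (hs.mem_nhds hxs) (hsub x hxs) (hψ x hxs)
    (hpos x hx)).frequently

lemma add_lt_add_of_subgradient_neg (hs : IsOpen s) (hc : Convex ℝ s)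
    (hsub : ∀ x ∈ s, ∀ y ∈ s, m x + σ x * (y - x) ≤ m y)
    (hψ : ∀ x ∈ s, HasDerivAt ψ (ψ' x) x) (ha : a ∈ s) (hb : b ∈ s) (hab : a < b)
    (hneg : ∀ x ∈ Ioo a b, σ x + ψ' x < 0) : m b + ψ b < m a + ψ a := by
  have hrefl := add_lt_add_of_subgradient_pos (s := -s) (m := fun x => m (-x))
    (σ := fun x => -σ (-x)) (ψ := fun x => ψ (-x)) (ψ' := fun x => -ψ' (-x)) (a := -b) (b := -a)
    hs.neg hc.neg (fun x hx y hy => by linarith [hsub (-x) hx (-y) hy])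
    (fun x hx => by
      simpa only [mul_neg_one, Function.comp_def] using (hψ (-x) hx).comp x (hasDerivAt_neg x))
    (by rwa [Set.mem_neg, neg_neg]) (by rwa [Set.mem_neg, neg_neg]) (neg_lt_neg hab)
    fun x hx => by linarith [hneg (-x) ⟨lt_neg.1 hx.2, neg_lt.1 hx.1⟩]
  simpa only [neg_neg] using hrefl

lemma add_lt_add_of_subgradient_zero {B b₀ y : ℝ} (hb₀ : b₀ ∈ Ioo 0 B)
    (hsub : ∀ b ∈ Ioo 0 B, ∀ c ∈ Ioo 0 B, m b + σ b * (c - b) ≤ m c)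
    (hψ : ∀ b ∈ Ioo 0 B, HasDerivAt ψ (ψ' b) b)
    (hlim : Tendsto (fun b => b * ψ' b - ψ b) (𝓝[>] 0) (𝓝 (-ψ 0)))
    (hneg : ∀ b ∈ Ioo 0 b₀, σ b + ψ' b < 0) (hy : ∀ b ∈ Ioo 0 B, m b + σ b * (0 - b) ≤ y) :
    m b₀ + ψ b₀ < y + ψ 0 := by
  have hsubset : Ioo 0 b₀ ⊆ Ioo 0 B := Ioo_subset_Ioo_right hb₀.2.le
  have hanti : ∀ {a b}, 0 < a → a < b → b ≤ b₀ → m b + ψ b < m a + ψ a := fun ha hab hb =>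
    add_lt_add_of_subgradient_neg isOpen_Ioo (convex_Ioo 0 B) hsub hψ
      ⟨ha, (hab.trans_le hb).trans hb₀.2⟩ ⟨ha.trans hab, hb.trans_lt hb₀.2⟩ hab
      fun x hx => hneg x ⟨ha.trans hx.1, hx.2.trans_le hb⟩
  obtain ⟨c, hc0, hcb⟩ := exists_between hb₀.1
  have hlower : ∀ b ∈ Ioo 0 c, m c + ψ c + (b * ψ' b - ψ b) ≤ y := fun b hb => by
    have hb' : b ∈ Ioo 0 b₀ := ⟨hb.1, hb.2.trans hcb⟩
    have hσ : b * (σ b + ψ' b) < 0 := mul_neg_of_pos_of_neg hb.1 (hneg b hb')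
    linarith [hy b (hsubset hb'), hanti hb.1 hb.2 hcb.le]
  have hle : m c + ψ c + -ψ 0 ≤ y := by
    refine le_of_tendsto (hlim.const_add (m c + ψ c)) ?_
    filter_upwards [Ioo_mem_nhdsGT hc0] with b hb using hlower b hb
  linarith [hanti hc0 hcb le_rfl]

/- Here `y` is any upper bound for the affine minorants of `m` at `x`; this covers the end point
`x = 0`, at which `m` has no prescribed value. -/
lemma add_lt_add_of_subgradient_sign {B b₀ x y : ℝ} (hb₀ : b₀ ∈ Ioo 0 B)
    (hsub : ∀ b ∈ Ioo 0 B, ∀ c ∈ Ioo 0 B, m b + σ b * (c - b) ≤ m c)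
    (hψ : ∀ b ∈ Ioo 0 B, HasDerivAt ψ (ψ' b) b)
    (hlim : Tendsto (fun b => b * ψ' b - ψ b) (𝓝[>] 0) (𝓝 (-ψ 0)))
    (hneg : ∀ b ∈ Ioo 0 b₀, σ b + ψ' b < 0) (hpos : ∀ b ∈ Ioo b₀ B, 0 < σ b + ψ' b)
    (hx : x ∈ Ico 0 B) (hne : x ≠ b₀) (hy : ∀ b ∈ Ioo 0 B, m b + σ b * (x - b) ≤ y) :
    m b₀ + ψ b₀ < y + ψ x := by
  rcases hx.1.eq_or_lt with rfl | hx0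
  · exact add_lt_add_of_subgradient_zero hb₀ hsub hψ hlim hneg hy
  have hxB : x ∈ Ioo 0 B := ⟨hx0, hx.2⟩
  have hmy : m x ≤ y := by simpa only [sub_self, mul_zero, add_zero] using hy x hxB
  have hlt : m b₀ + ψ b₀ < m x + ψ x := by
    rcases hne.lt_or_gt with hlt | hlt
    · exact add_lt_add_of_subgradient_neg isOpen_Ioo (convex_Ioo 0 B) hsub hψ hxB hb₀ hlt
        fun b hb => hneg b ⟨hx0.trans hb.1, hb.2⟩
    · exact add_lt_add_of_subgradient_pos isOpen_Ioo (convex_Ioo 0 B) hsub hψ hb₀ hxB hlt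
        fun b hb => hpos b ⟨hb.1, hb.2.trans hx.2⟩
  linarith

end Subgradient

section Radial

/-- The deformation `r = R e^w` of the annulus with trajectory `z = (q, w)` in the variable
`s = ln (R/ε)`. -/
def toRadial (ε : ℝ) (z : ℝ → ℝ × ℝ) (R : ℝ) : ℝ := R * exp (z (log R - log ε)).2

/-- The derivative of `toRadial ε z` when `z` solves the modified equilibrium equation. -/
def toRadialDeriv (n : ℕ) (κ : ℝ) (h' : ℝ → ℝ) (ε : ℝ) (z : ℝ → ℝ × ℝ) (R : ℝ) : ℝ :=
  stretch n κ h' (z (log R - log ε)) * exp (z (log R - log ε)).2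

/-- The second derivative of `toRadial ε z` when `z` solves the modified equilibrium equation. -/
def toRadialDeriv2 (n : ℕ) (κ : ℝ) (h' h'' : ℝ → ℝ) (ε : ℝ) (z : ℝ → ℝ × ℝ) (R : ℝ) : ℝ :=
  let p := stretch n κ h' (z (log R - log ε))
  let w := (z (log R - log ε)).2
  (p - decayRate n κ h'' p p w) * (p - 1) * exp w * R⁻¹

variable {n : ℕ} {κ ε : ℝ} {h h' h'' : ℝ → ℝ} {z : ℝ → ℝ × ℝ}

lemma log_sub_log_mem_Icc (hε : 0 < ε) {R : ℝ} (hR : R ∈ Icc ε 1) :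
    log R - log ε ∈ Icc 0 (-log ε) := by
  have hlow := log_le_log hε hR.1
  have hup := log_nonpos (hε.le.trans hR.1) hR.2
  constructor <;> linarith

lemma hasDerivWithinAt_comp_log {f : ℝ → ℝ} {f' : ℝ} (hε : 0 < ε) {R : ℝ} (hR : R ∈ Icc ε 1)
    (hf : HasDerivWithinAt f f' (Icc 0 (-log ε)) (log R - log ε)) :
    HasDerivWithinAt (fun R => f (log R - log ε)) (f' * R⁻¹) (Icc ε 1) R :=
  hf.comp R ((hasDerivAt_log (hε.trans_le hR.1).ne').sub_const _).hasDerivWithinAt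
    fun _ hx => log_sub_log_mem_Icc hε hx

lemma continuousOn_comp_log {f : ℝ → ℝ} (hε : 0 < ε) (hf : ContinuousOn f (Icc 0 (-log ε))) :
    ContinuousOn (fun R => f (log R - log ε)) (Icc ε 1) :=
  hf.comp ((continuousOn_log.mono fun _ hR => (hε.trans_le hR.1).ne').sub continuousOn_const)
    fun _ hR => log_sub_log_mem_Icc hε hR

lemma toRadial_pos (z : ℝ → ℝ × ℝ) {R : ℝ} (hR : 0 < R) : 0 < toRadial ε z R :=
  mul_pos hR (exp_pos _)

lemma toRadial_div (z : ℝ → ℝ × ℝ) {R : ℝ} (hR : R ≠ 0) :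
    toRadial ε z R / R = exp (z (log R - log ε)).2 :=
  mul_div_cancel_left₀ _ hR

lemma mul_toRadialDeriv_div (z : ℝ → ℝ × ℝ) {R : ℝ} (hR : R ≠ 0) :
    R * toRadialDeriv n κ h' ε z R / toRadial ε z R = stretch n κ h' (z (log R - log ε)) := by
  unfold toRadialDeriv toRadial
  field_simp

lemma toRadialDeriv_mul_pow (hn : n ≠ 0) (z : ℝ → ℝ × ℝ) {R : ℝ} (hR : R ≠ 0) :
    toRadialDeriv n κ h' ε z R * (toRadial ε z R / R) ^ (n - 1) =
      stretch n κ h' (z (log R - log ε)) * exp (n * (z (log R - log ε)).2) := by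
  rw [toRadial_div z hR, toRadialDeriv, mul_assoc, mul_pow_sub_one hn, exp_nat_mul]

lemma toRadial_inner_pow (hε : 0 < ε) (z : ℝ → ℝ × ℝ) :
    toRadial ε z ε ^ n = exp (n * ((z 0).2 + log ε)) := by
  rw [exp_nat_mul, exp_add, exp_log hε, toRadial, sub_self, mul_comm]

lemma toRadial_one (ε : ℝ) (z : ℝ → ℝ × ℝ) : toRadial ε z 1 = exp (z (-log ε)).2 := by
  rw [toRadial, log_one, zero_sub, one_mul]

lemma THat_toRadial (hn : n ≠ 0) (hκ : 0 < κ) (hh : GoodH h h' h'') (z : ℝ → ℝ × ℝ) {R : ℝ}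
    (hR : R ≠ 0) : THat n κ h' (toRadialDeriv n κ h' ε z R) (toRadial ε z R / R) =
      traction n κ (z (log R - log ε)) := by
  rw [THat, toRadialDeriv_mul_pow hn z hR, toRadial_div z hR, log_exp, toRadialDeriv,
    mul_div_cancel_right₀ _ (exp_ne_zero _), ← stressC, stressC_stretch hκ hh, traction]
  ring

lemma pow_mul_PhiHat1 {q u R : ℝ} (hR : 0 < R) (hu : 0 < u) :
    R ^ (n - 1) * PhiHat1 n κ h' q (u / R) = u ^ (n - 1) * THat n κ h' q (u / R) := by
  have hu_pow : R ^ (n - 1) * (u / R) ^ (n - 1) = u ^ (n - 1) := by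
    rw [← mul_pow, mul_div_cancel₀ _ hR.ne']
  have hq_pow : u ^ (n - 1) * (q / (u / R)) ^ (n - 1) = R ^ (n - 1) * q ^ (n - 1) := by
    rw [← mul_pow, ← mul_pow]
    congr 1
    field
  rw [PhiHat1, THat]
  linear_combination (h' (q * (u / R) ^ (n - 1)) +
    κ * (((n : ℝ) - 1) / n + ((n : ℝ) - 1) * log (u / R))) * hu_pow - κ * hq_pow

lemma PhiHat2_eq_THat (q v : ℝ) :
    PhiHat2 n κ h' q v = q * v ^ (n - 2) * (THat n κ h' q v + κ * (1 - (q / v) ^ (n - 1))) := by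
  rw [PhiHat2, THat]
  ring

namespace IsPolarSol

lemma hasDeriv_toRadial (hε : 0 < ε) (S : IsPolarSol n κ h' (-log ε) z) {R : ℝ}
    (hR : R ∈ Icc ε 1) :
    HasDerivWithinAt (toRadial ε z) (toRadialDeriv n κ h' ε z R) (Icc ε 1) R := by
  have hR0 := hε.trans_le hR.1
  refine ((hasDerivWithinAt_id R _).mul (hasDerivWithinAt_comp_log hε hR
    (S.hasDeriv_snd (log_sub_log_mem_Icc hε hR))).exp).congr_deriv ?_
  simp only [id, toRadialDeriv]
  field

lemma continuousOn_toRadialDeriv (hκ : 0 < κ) (hh : GoodH h h' h'') (hε : 0 < ε)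
    (S : IsPolarSol n κ h' (-log ε) z) :
    ContinuousOn (toRadialDeriv n κ h' ε z) (Icc ε 1) :=
  (continuousOn_comp_log hε (S.continuousOn_stretch hκ hh)).mul
    (continuousOn_comp_log hε (continuous_snd.comp_continuousOn S.continuousOn)).rexp

lemma extremal (hn : n ≠ 0) (hκ : 0 < κ) (hh : GoodH h h' h'') (hε : 0 < ε)
    (S : IsPolarSol n κ h' (-log ε) z) :
    Extremal n κ h' ε (toRadial ε z) (toRadialDeriv n κ h' ε z)
      (fun R => (z (log R - log ε)).1) where
  pos R hR := toRadial_pos z (hε.trans_le hR.1)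
  deriv_pos R _ := mul_pos (stretch_pos hκ hh _) (exp_pos _)
  hasDeriv R hR := S.hasDeriv_toRadial hε hR
  continuousOn_deriv := S.continuousOn_toRadialDeriv hκ hh hε
  hasDeriv_q R hR := by
    rw [mul_toRadialDeriv_div z (hε.trans_le hR.1).ne']
    refine (hasDerivWithinAt_comp_log hε hR
      (S.hasDeriv_fst (log_sub_log_mem_Icc hε hR))).congr_deriv ?_
    ring
  q_eq R hR := by
    have hR0 := (hε.trans_le hR.1).ne'
    rw [mul_toRadialDeriv_div z hR0, del, toRadialDeriv_mul_pow hn z hR0, ← stressC,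
      stressC_stretch hκ hh]

lemma hasDeriv_toRadialDeriv (hκ : 0 < κ) (hh : GoodH h h' h'') (hε : 0 < ε)
    (S : IsPolarSol n κ h' (-log ε) z) {R : ℝ} (hR : R ∈ Icc ε 1) :
    HasDerivWithinAt (toRadialDeriv n κ h' ε z) (toRadialDeriv2 n κ h' h'' ε z R) (Icc ε 1) R := by
  have hs := log_sub_log_mem_Icc hε hR
  refine ((hasDerivWithinAt_comp_log hε hR (hasDerivWithinAt_stretch hκ hh (S _ hs))).mul
    (hasDerivWithinAt_comp_log hε hR (S.hasDeriv_snd hs)).exp).congr_deriv ?_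
  simp only [toRadialDeriv2]
  ring

lemma continuousOn_toRadialDeriv2 (hκ : 0 < κ) (hh : GoodH h h' h'') (hε : 0 < ε)
    (S : IsPolarSol n κ h' (-log ε) z) :
    ContinuousOn (toRadialDeriv2 n κ h' h'' ε z) (Icc ε 1) := by
  have hp := continuousOn_comp_log hε (S.continuousOn_stretch hκ hh)
  have hw := continuousOn_comp_log hε (continuous_snd.comp_continuousOn S.continuousOn)
  exact (((hp.sub (continuousOn_comp_log hε (S.continuousOn_decayRate hκ hh))).mul
    (hp.sub continuousOn_const)).mul hw.rexp).mul
    (continuousOn_id.inv₀ fun x hx => (hε.trans_le hx.1).ne')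

lemma hasDerivAt_PhiHat1 (hn : 2 ≤ n) (hκ : 0 < κ) (hh : GoodH h h' h'') (hε : 0 < ε)
    (S : IsPolarSol n κ h' (-log ε) z) {R : ℝ} (hR : R ∈ Ioo ε 1) :
    HasDerivAt (fun s => s ^ (n - 1) *
        PhiHat1 n κ h' (toRadialDeriv n κ h' ε z s) (toRadial ε z s / s))
      (((n : ℝ) - 1) * R ^ (n - 2) *
        PhiHat2 n κ h' (toRadialDeriv n κ h' ε z R) (toRadial ε z R / R)) R := by
  have hn0 : n ≠ 0 := by omega
  have hR' := Ioo_subset_Icc_self hR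
  have hR0 : 0 < R := hε.trans hR.1
  have hnhds := Icc_mem_nhds hR.1 hR.2
  have hderiv := (((S.hasDeriv_toRadial hε hR').pow (n - 1)).mul (hasDerivWithinAt_comp_log hε hR'
    (S.hasDeriv_traction (log_sub_log_mem_Icc hε hR')))).hasDerivAt hnhds
  refine (hderiv.congr_of_eventuallyEq ?_).congr_deriv ?_
  · filter_upwards [hnhds] with s hs
    have hs0 := hε.trans_le hs.1
    rw [pow_mul_PhiHat1 hs0 (toRadial_pos z hs0), THat_toRadial hn0 hκ hh z hs0.ne']
    rfl
  · rw [PhiHat2_eq_THat, THat_toRadial hn0 hκ hh z hR0.ne',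
      toRadial_div z hR0.ne']
    simp only [Pi.pow_apply, toRadial, toRadialDeriv]
    obtain ⟨m, rfl⟩ := Nat.exists_eq_add_of_le' hn
    have e₁ : m + 2 - 1 = m + 1 := rfl
    have e₂ : m + 2 - 2 = m := rfl
    have e₃ : m + 1 - 1 = m := rfl
    rw [e₁, e₂, e₃]
    push_cast
    field_simp
    ring

end IsPolarSol

end Radial

section Minimizer

/-- The part of minus the calibration at the inner boundary that depends on the competitor only
through `x = r(ε)ⁿ`; it is concave in `x`. -/
def innerTerm (n : ℕ) (κ ε x : ℝ) : ℝ :=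
  κ * ((n : ℝ) - 1) / n ^ 2 * (n * x * log ε - x * log x)

/-- The trajectory `z` gives an extremal with outer radius `lam` and traction-free inner
boundary. -/
structure IsStressFree (n : ℕ) (κ : ℝ) (h' : ℝ → ℝ) (ε lam : ℝ) (z : ℝ → ℝ × ℝ) : Prop where
  sol : IsPolarSol n κ h' (-log ε) z
  traction_eq : traction n κ (z 0) = 0
  outer_eq : toRadial ε z 1 = lam

variable {n : ℕ} {κ ε lam : ℝ} {h h' h'' v v' : ℝ → ℝ} {z z₁ z₂ : ℝ → ℝ × ℝ}

lemma calib_eq_sub_innerTerm (hn : n ≠ 0) (q : ℝ → ℝ) :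
    calib n κ q v ε = 1 / n * (q ε * v ε ^ n) - innerTerm n κ ε (v ε ^ n) := by
  rw [calib, innerTerm, log_pow]
  field_simp
  ring

lemma hasDerivAt_innerTerm {x : ℝ} (hx : x ≠ 0) :
    HasDerivAt (innerTerm n κ ε) (κ * ((n : ℝ) - 1) / n ^ 2 * (n * log ε - log x - 1)) x := by
  refine (((((hasDerivAt_id x).const_mul (n : ℝ)).mul_const (log ε)).sub
    (hasDerivAt_mul_log hx)).const_mul (κ * ((n : ℝ) - 1) / n ^ 2)).congr_deriv ?_
  ring

lemma tendsto_mul_deriv_innerTerm_sub (n : ℕ) (κ ε : ℝ) :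
    Tendsto (fun x => x * (κ * ((n : ℝ) - 1) / n ^ 2 * (n * log ε - log x - 1)) -
      innerTerm n κ ε x) (nhdsWithin 0 (Ioi 0)) (nhds (-innerTerm n κ ε 0)) := by
  have hlin : ∀ x, x * (κ * ((n : ℝ) - 1) / n ^ 2 * (n * log ε - log x - 1)) -
      innerTerm n κ ε x = -(κ * ((n : ℝ) - 1) / n ^ 2 * x) := fun x => by
    rw [innerTerm]
    ring
  have hzero : innerTerm n κ ε 0 = κ * ((n : ℝ) - 1) / n ^ 2 * 0 := by simp [innerTerm]
  simp only [hlin, hzero]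
  exact ((continuous_const.mul continuous_id).neg.tendsto 0).mono_left nhdsWithin_le_nhds

lemma neg_stress_div_add_deriv_innerTerm (hn : n ≠ 0) (hε : 0 < ε) (z : ℝ → ℝ × ℝ) :
    -(z 0).1 / n + κ * ((n : ℝ) - 1) / n ^ 2 *
      (n * log ε - log (toRadial ε z ε ^ n) - 1) = -traction n κ (z 0) / n := by
  rw [toRadial_inner_pow hε, log_exp, traction]
  field_simp
  ring

lemma toRadial_inner_pow_lt_iff (hn : n ≠ 0) (hε : 0 < ε) :
    toRadial ε z₁ ε ^ n < toRadial ε z₂ ε ^ n ↔ (z₁ 0).2 < (z₂ 0).2 := by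
  have hn' : (0 : ℝ) < n := by positivity
  rw [toRadial_inner_pow hε, toRadial_inner_pow hε, exp_lt_exp, mul_lt_mul_iff_right₀ hn',
    add_lt_add_iff_right]

lemma AdmE.inner_lt (hε1 : ε < 1) (A : AdmE ε lam v v') : v ε < lam := by
  have hlt := A.strictMonoOn ⟨le_rfl, hε1.le⟩ ⟨hε1.le, le_rfl⟩ hε1
  rwa [A.bc] at hlt

lemma AdmE.lam_pos (hε1 : ε < 1) (A : AdmE ε lam v v') : 0 < lam :=
  A.c0.trans_lt (A.inner_lt hε1)

lemma AdmE.inner_pow_mem_Ico (hn : n ≠ 0) (hε1 : ε < 1) (A : AdmE ε lam v v') :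
    v ε ^ n ∈ Ico 0 (lam ^ n) :=
  ⟨pow_nonneg A.c0 n, pow_lt_pow_left₀ (A.inner_lt hε1) A.c0 hn⟩

lemma exists_isPolarSol_toRadial (hn : 2 ≤ n) (hκ : 0 < κ) (hh : GoodH h h' h'') (hε : 0 < ε)
    (hε1 : ε < 1) (hlam : 0 < lam) {b : ℝ} (hb : b ∈ Ioo 0 (lam ^ n)) :
    ∃ z, IsPolarSol n κ h' (-log ε) z ∧ toRadial ε z 1 = lam ∧ toRadial ε z ε ^ n = b := by
  have hn0 : (0 : ℝ) < n := by positivity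
  have hlog : log b / n - log ε < log lam + -log ε := by
    have := log_lt_log hb.1 hb.2
    rw [log_pow] at this
    rw [← sub_eq_add_neg, sub_lt_sub_iff_right, div_lt_iff₀' hn0]
    exact this
  obtain ⟨z, S, hin, hout⟩ := exists_isPolarSol_inner_snd_eq hn hκ hh
    (neg_pos.2 (log_neg hε hε1)) hlog
  refine ⟨z, S, by rw [toRadial_one, hout, exp_log hlam], ?_⟩
  rw [toRadial_inner_pow hε, hin, sub_add_cancel, mul_div_cancel₀ _ hn0.ne', exp_log hb.1]

lemma IsPolarSol.admE_toRadial (hn : n ≠ 0) (hκ : 0 < κ) (hh : GoodH h h' h'') (hε : 0 < ε)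
    (hε1 : ε ≤ 1) (S : IsPolarSol n κ h' (-log ε) z) (hz : toRadial ε z 1 = lam) :
    AdmE ε lam (toRadial ε z) (toRadialDeriv n κ h' ε z) :=
  hz ▸ (S.extremal hn hκ hh hε).admE hε1

lemma IsPolarSol.integrableOn_energyDensity (hn : 2 ≤ n) (hκ : 0 < κ) (hh : GoodH h h' h'')
    (hε : 0 < ε) (hε1 : ε ≤ 1) (S : IsPolarSol n κ h' (-log ε) z) :
    IntegrableOn (energyDensity n κ h (toRadial ε z) (toRadialDeriv n κ h' ε z)) (Ioc ε 1) :=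
  (S.extremal (by omega) hκ hh hε).integrableOn_self hn hh hε hε1

lemma IsPolarSol.integral_add_mul_le (hn : 2 ≤ n) (hκ : 0 < κ) (hh : GoodH h h' h'')
    (hε : 0 < ε) (hε1 : ε < 1) (S : IsPolarSol n κ h' (-log ε) z) (hz : toRadial ε z 1 = lam)
    (A : AdmE ε lam v v') (hint : IntegrableOn (energyDensity n κ h v v') (Ioc ε 1)) :
    (∫ R in Ioc ε 1, energyDensity n κ h (toRadial ε z) (toRadialDeriv n κ h' ε z) R) -
        innerTerm n κ ε (toRadial ε z ε ^ n) + -(z 0).1 / n * (v ε ^ n - toRadial ε z ε ^ n) ≤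
      (∫ R in Ioc ε 1, energyDensity n κ h v v' R) - innerTerm n κ ε (v ε ^ n) := by
  have hn0 : n ≠ 0 := by omega
  subst hz
  have hle := (S.extremal hn0 hκ hh hε).calib_sub_calib_le hn hκ hh hε hε1.le A hint
  rw [calib_eq_sub_innerTerm hn0, calib_eq_sub_innerTerm hn0] at hle
  simp only [sub_self] at hle
  linear_combination hle

namespace IsStressFree

lemma exists_of_pos (hn : 2 ≤ n) (hκ : 0 < κ) (hh : GoodH h h' h'') (hε : 0 < ε) (hε1 : ε ≤ 1)
    (hlam : 0 < lam) : ∃ z, IsStressFree n κ h' ε lam z := by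
  obtain ⟨z, S, hT, hW⟩ := exists_isPolarSol_traction_eq_zero hn hκ hh
    (neg_nonneg.2 (log_nonpos hε.le hε1)) (log lam)
  exact ⟨z, S, hT, by rw [toRadial_one, hW, exp_log hlam]⟩

lemma traction_pos (hn : 2 ≤ n) (hκ : 0 < κ) (hh : GoodH h h' h'') (hε : 0 < ε) (hε1 : ε ≤ 1)
    (S : IsStressFree n κ h' ε lam z) (S₁ : IsPolarSol n κ h' (-log ε) z₁)
    (hz₁ : toRadial ε z₁ 1 = lam) (hw : (z₁ 0).2 < (z 0).2) : 0 < traction n κ (z₁ 0) := by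
  by_contra! hT
  have hlt := S₁.endpoint_lt hn hκ hh S.sol (neg_nonneg.2 (log_nonpos hε.le hε1)) hT
    S.traction_eq.ge hw
  rw [← exp_lt_exp, ← toRadial_one, ← toRadial_one, hz₁, S.outer_eq] at hlt
  exact lt_irrefl _ hlt

lemma traction_neg (hn : 2 ≤ n) (hκ : 0 < κ) (hh : GoodH h h' h'') (hε : 0 < ε) (hε1 : ε ≤ 1)
    (S : IsStressFree n κ h' ε lam z) (S₁ : IsPolarSol n κ h' (-log ε) z₁)
    (hz₁ : toRadial ε z₁ 1 = lam) (hw : (z 0).2 < (z₁ 0).2) : traction n κ (z₁ 0) < 0 := by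
  by_contra! hT
  have hlt := S.sol.endpoint_lt hn hκ hh S₁ (neg_nonneg.2 (log_nonpos hε.le hε1))
    S.traction_eq.le hT hw
  rw [← exp_lt_exp, ← toRadial_one, ← toRadial_one, hz₁, S.outer_eq] at hlt
  exact lt_irrefl _ hlt

lemma neg_stress_div_add_neg (hn : 2 ≤ n) (hκ : 0 < κ) (hh : GoodH h h' h'') (hε : 0 < ε)
    (hε1 : ε ≤ 1) (S : IsStressFree n κ h' ε lam z) (S₁ : IsPolarSol n κ h' (-log ε) z₁)
    (hz₁ : toRadial ε z₁ 1 = lam) (hlt : toRadial ε z₁ ε ^ n < toRadial ε z ε ^ n) :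
    -(z₁ 0).1 / n + κ * ((n : ℝ) - 1) / n ^ 2 *
      (n * log ε - log (toRadial ε z₁ ε ^ n) - 1) < 0 := by
  have hn0 : n ≠ 0 := by omega
  rw [neg_stress_div_add_deriv_innerTerm hn0 hε, neg_div]
  exact neg_neg_of_pos (div_pos (S.traction_pos hn hκ hh hε hε1 S₁ hz₁
    ((toRadial_inner_pow_lt_iff hn0 hε).1 hlt)) (by positivity))

lemma neg_stress_div_add_pos (hn : 2 ≤ n) (hκ : 0 < κ) (hh : GoodH h h' h'') (hε : 0 < ε)
    (hε1 : ε ≤ 1) (S : IsStressFree n κ h' ε lam z) (S₁ : IsPolarSol n κ h' (-log ε) z₁)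
    (hz₁ : toRadial ε z₁ 1 = lam) (hlt : toRadial ε z ε ^ n < toRadial ε z₁ ε ^ n) :
    0 < -(z₁ 0).1 / n + κ * ((n : ℝ) - 1) / n ^ 2 *
      (n * log ε - log (toRadial ε z₁ ε ^ n) - 1) := by
  have hn0 : n ≠ 0 := by omega
  rw [neg_stress_div_add_deriv_innerTerm hn0 hε]
  exact div_pos (neg_pos.2 (S.traction_neg hn hκ hh hε hε1 S₁ hz₁
    ((toRadial_inner_pow_lt_iff hn0 hε).1 hlt))) (by positivity)

lemma integral_lt (hn : 2 ≤ n) (hκ : 0 < κ) (hh : GoodH h h' h'') (hε : 0 < ε) (hε1 : ε < 1)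
    (S : IsStressFree n κ h' ε lam z) (A : AdmE ε lam v v')
    (hint : IntegrableOn (energyDensity n κ h v v') (Ioc ε 1)) (hne : v ε ≠ toRadial ε z ε) :
    ∫ R in Ioc ε 1, energyDensity n κ h (toRadial ε z) (toRadialDeriv n κ h' ε z) R <
      ∫ R in Ioc ε 1, energyDensity n κ h v v' R := by
  have hn0 : n ≠ 0 := by omega
  have B := S.sol.admE_toRadial hn0 hκ hh hε hε1.le S.outer_eq
  have hb₀ : toRadial ε z ε ^ n ∈ Ioo 0 (lam ^ n) :=
    ⟨pow_pos (toRadial_pos z hε) n, (B.inner_pow_mem_Ico hn0 hε1).2⟩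
  choose! Z hZ hZ1 hZε using fun b (hb : b ∈ Ioo 0 (lam ^ n)) =>
    exists_isPolarSol_toRadial hn hκ hh hε hε1 (A.lam_pos hε1) hb
  have hadm := fun b hb => (hZ b hb).admE_toRadial hn0 hκ hh hε hε1.le (hZ1 b hb)
  have hfin := fun b hb => (hZ b hb).integrableOn_energyDensity hn hκ hh hε hε1.le
  have hsub : ∀ b ∈ Ioo 0 (lam ^ n), ∀ {u u' : ℝ → ℝ}, AdmE ε lam u u' →
      IntegrableOn (energyDensity n κ h u u') (Ioc ε 1) →
      (∫ R in Ioc ε 1, energyDensity n κ h (toRadial ε (Z b)) (toRadialDeriv n κ h' ε (Z b)) R) -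
        innerTerm n κ ε b + -(Z b 0).1 / n * (u ε ^ n - b) ≤
      (∫ R in Ioc ε 1, energyDensity n κ h u u' R) - innerTerm n κ ε (u ε ^ n) := by
    intro b hb u u' C hC
    simpa only [hZε b hb] using (hZ b hb).integral_add_mul_le hn hκ hh hε hε1 (hZ1 b hb) C hC
  have hlt := add_lt_add_of_subgradient_sign hb₀
    (fun b hb c hc => by simpa only [hZε c hc] using hsub b hb (hadm c hc) (hfin c hc))
    (fun b hb => hasDerivAt_innerTerm (n := n) (κ := κ) (ε := ε) hb.1.ne')
    (tendsto_mul_deriv_innerTerm_sub n κ ε)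
    (fun b hb => by
      have hbI : b ∈ Ioo 0 (lam ^ n) := ⟨hb.1, hb.2.trans hb₀.2⟩
      simpa only [hZε b hbI, hb.2, forall_const] using
        S.neg_stress_div_add_neg hn hκ hh hε hε1.le (hZ b hbI) (hZ1 b hbI))
    (fun b hb => by
      have hbI : b ∈ Ioo 0 (lam ^ n) := ⟨hb₀.1.trans hb.1, hb.2⟩
      simpa only [hZε b hbI, hb.1, forall_const] using
        S.neg_stress_div_add_pos hn hκ hh hε hε1.le (hZ b hbI) (hZ1 b hbI))
    (A.inner_pow_mem_Ico hn0 hε1) (fun heq => hne ((pow_left_inj₀ A.c0 B.c0 hn0).1 heq))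
    (fun b hb => hsub b hb A hint)
  have hmin := S.sol.integral_add_mul_le hn hκ hh hε hε1 S.outer_eq (hadm _ hb₀) (hfin _ hb₀)
  rw [hZε _ hb₀, sub_self, mul_zero, add_zero, sub_le_sub_iff_right] at hmin
  linarith

lemma eqOn_of_integral_le (hn : 2 ≤ n) (hκ : 0 < κ) (hh : GoodH h h' h'') (hε : 0 < ε)
    (hε1 : ε < 1) (S : IsStressFree n κ h' ε lam z) (A : AdmE ε lam v v')
    (hint : IntegrableOn (energyDensity n κ h v v') (Ioc ε 1))
    (hle : ∫ R in Ioc ε 1, energyDensity n κ h v v' R ≤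
      ∫ R in Ioc ε 1, energyDensity n κ h (toRadial ε z) (toRadialDeriv n κ h' ε z) R) :
    EqOn v (toRadial ε z) (Icc ε 1) := by
  have hin : v ε = toRadial ε z ε := by
    by_contra hne
    exact hle.not_gt (S.integral_lt hn hκ hh hε hε1 A hint hne)
  exact (S.sol.extremal (by omega) hκ hh hε).eqOn_of_integral_le hn hκ hh hε hε1.le
    (S.outer_eq.symm ▸ A) hint hin hle

lemma integral_le (hn : 2 ≤ n) (hκ : 0 < κ) (hh : GoodH h h' h'') (hε : 0 < ε) (hε1 : ε < 1)
    (S : IsStressFree n κ h' ε lam z) (A : AdmE ε lam v v')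
    (hint : IntegrableOn (energyDensity n κ h v v') (Ioc ε 1)) :
    ∫ R in Ioc ε 1, energyDensity n κ h (toRadial ε z) (toRadialDeriv n κ h' ε z) R ≤
      ∫ R in Ioc ε 1, energyDensity n κ h v v' R := by
  by_cases hin : v ε = toRadial ε z ε
  · have hle := S.sol.integral_add_mul_le hn hκ hh hε hε1 S.outer_eq A hint
    rwa [hin, sub_self, mul_zero, add_zero, sub_le_sub_iff_right] at hle
  · exact (S.integral_lt hn hκ hh hε hε1 A hint hin).le

lemma IHatEps_le (hn : 2 ≤ n) (hκ : 0 < κ) (hh : GoodH h h' h'') (hε : 0 < ε) (hε1 : ε < 1)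
    (S : IsStressFree n κ h' ε lam z) (A : AdmE ε lam v v') :
    IHatEps n κ ε lam h (toRadial ε z) (toRadialDeriv n κ h' ε z) ≤
      IHatEps n κ ε lam h v v' := by
  by_cases hint : IntegrableOn (energyDensity n κ h v v') (Ioc ε 1)
  · rw [IHatEps_of_integrableOn hint, IHatEps_of_integrableOn
      (S.sol.integrableOn_energyDensity hn hκ hh hε hε1.le), EReal.coe_le_coe_iff]
    exact sub_le_sub_right (S.integral_le hn hκ hh hε hε1 A hint) _
  · rw [(S.sol.extremal (by omega) hκ hh hε).IHatEps_of_not_integrableOn hn hκ hh hε hε1.le A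
      hint]
    exact le_top

lemma eqOn_of_IHatEps_le (hn : 2 ≤ n) (hκ : 0 < κ) (hh : GoodH h h' h'') (hε : 0 < ε)
    (hε1 : ε < 1) (S : IsStressFree n κ h' ε lam z) (A : AdmE ε lam v v')
    (hle : IHatEps n κ ε lam h v v' ≤
      IHatEps n κ ε lam h (toRadial ε z) (toRadialDeriv n κ h' ε z)) :
    EqOn v (toRadial ε z) (Icc ε 1) := by
  rw [IHatEps_of_integrableOn (S.sol.integrableOn_energyDensity hn hκ hh hε hε1.le)] at hle
  by_cases hint : IntegrableOn (energyDensity n κ h v v') (Ioc ε 1)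
  · rw [IHatEps_of_integrableOn hint, EReal.coe_le_coe_iff, sub_le_sub_iff_right] at hle
    exact S.eqOn_of_integral_le hn hκ hh hε hε1 A hint hle
  · rw [(S.sol.extremal (by omega) hκ hh hε).IHatEps_of_not_integrableOn hn hκ hh hε hε1.le A
      hint] at hle
    exact absurd hle (EReal.coe_lt_top _).not_ge

lemma exists_regular_of_eqOn (hn : 2 ≤ n) (hκ : 0 < κ) (hh : GoodH h h' h'') (hε : 0 < ε)
    (hε1 : ε ≤ 1) (S : IsStressFree n κ h' ε lam z) (heq : EqOn v (toRadial ε z) (Icc ε 1)) :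
    ∃ ρ ρ' : ℝ → ℝ,
      (∀ R ∈ Icc ε 1, HasDerivWithinAt v (ρ R) (Icc ε 1) R) ∧
      (∀ R ∈ Icc ε 1, HasDerivWithinAt ρ (ρ' R) (Icc ε 1) R) ∧
      ContinuousOn ρ' (Icc ε 1) ∧
      (∀ R ∈ Ioo ε 1, HasDerivAt (fun s => s ^ (n - 1) * PhiHat1 n κ h' (ρ s) (v s / s))
        (((n : ℝ) - 1) * R ^ (n - 2) * PhiHat2 n κ h' (ρ R) (v R / R)) R) ∧
      (∀ R ∈ Icc ε 1, 0 < ρ R) ∧ 0 < v ε ∧ THat n κ h' (ρ ε) (v ε / ε) = 0 := by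
  have hn0 : n ≠ 0 := by omega
  have E := S.sol.extremal hn0 hκ hh hε
  have hin : v ε = toRadial ε z ε := heq ⟨le_rfl, hε1⟩
  refine ⟨toRadialDeriv n κ h' ε z, toRadialDeriv2 n κ h' h'' ε z,
    fun R hR => (E.hasDeriv R hR).congr heq (heq hR),
    fun R hR => S.sol.hasDeriv_toRadialDeriv hκ hh hε hR,
    S.sol.continuousOn_toRadialDeriv2 hκ hh hε, fun R hR => ?_, E.deriv_pos, ?_, ?_⟩
  · rw [heq (Ioo_subset_Icc_self hR)]
    refine (S.sol.hasDerivAt_PhiHat1 hn hκ hh hε hR).congr_of_eventuallyEq ?_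
    filter_upwards [Icc_mem_nhds hR.1 hR.2] with s hs
    rw [heq hs]
  · rw [hin]
    exact toRadial_pos z hε
  · rw [hin, THat_toRadial hn0 hκ hh z hε.ne', sub_self, S.traction_eq]

end IsStressFree

end Minimizer

theorem stmt18_general (n : ℕ) (hn : 2 ≤ n) (κ : ℝ) (hκ : 0 < κ)
    (h h' h'' : ℝ → ℝ) (hh : GoodH h h' h'') (ε : ℝ) (hε : ε ∈ Ioo (0 : ℝ) 1) :
    (∀ lam : ℝ, 0 < lam →
      ∃ re re' : ℝ → ℝ, AdmE ε lam re re' ∧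
        (∀ s s' : ℝ → ℝ, AdmE ε lam s s' →
          IHatEps n κ ε lam h re re' ≤ IHatEps n κ ε lam h s s') ∧
        (∀ s s' : ℝ → ℝ, AdmE ε lam s s' →
          (∀ t t' : ℝ → ℝ, AdmE ε lam t t' →
            IHatEps n κ ε lam h s s' ≤ IHatEps n κ ε lam h t t') →
          ∀ R ∈ Icc ε 1, s R = re R)) ∧
    ∀ lam : ℝ, ∀ re re' : ℝ → ℝ, AdmE ε lam re re' →
      (∀ s s' : ℝ → ℝ, AdmE ε lam s s' →
        IHatEps n κ ε lam h re re' ≤ IHatEps n κ ε lam h s s') →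
      ∃ ρ ρ' : ℝ → ℝ,
        (∀ R ∈ Icc ε 1, HasDerivWithinAt re (ρ R) (Icc ε 1) R) ∧
        (∀ R ∈ Icc ε 1, HasDerivWithinAt ρ (ρ' R) (Icc ε 1) R) ∧
        ContinuousOn ρ' (Icc ε 1) ∧
        (∀ R ∈ Ioo ε 1, HasDerivAt (fun s => s ^ (n - 1) * PhiHat1 n κ h' (ρ s) (re s / s))
          (((n : ℝ) - 1) * R ^ (n - 2) * PhiHat2 n κ h' (ρ R) (re R / R)) R) ∧
        (∀ R ∈ Icc ε 1, 0 < ρ R) ∧ 0 < re ε ∧ THat n κ h' (ρ ε) (re ε / ε) = 0 := by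
  obtain ⟨hε0, hε1⟩ := hε
  refine ⟨fun lam hlam => ?_, fun lam re re' A hmin => ?_⟩
  · obtain ⟨z, S⟩ := IsStressFree.exists_of_pos hn hκ hh hε0 hε1.le hlam
    have B := S.sol.admE_toRadial (by omega) hκ hh hε0 hε1.le S.outer_eq
    exact ⟨_, _, B, fun s s' C => S.IHatEps_le hn hκ hh hε0 hε1 C,
      fun s s' C hC => S.eqOn_of_IHatEps_le hn hκ hh hε0 hε1 C (hC _ _ B)⟩
  · obtain ⟨z, S⟩ := IsStressFree.exists_of_pos hn hκ hh hε0 hε1.le (A.lam_pos hε1)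
    have B := S.sol.admE_toRadial (by omega) hκ hh hε0 hε1.le S.outer_eq
    exact S.exists_regular_of_eqOn hn hκ hh hε0 hε1.le
      (S.eqOn_of_IHatEps_le hn hκ hh hε0 hε1 A (hmin _ _ B))

/-- for each `ε ∈ (0,1)` the punctured-ball functional `Î_ε` has a unique
global minimizer over `𝒜_λ^ε`; moreover there is `δ(ε) > 0` such that for
`λ > 1 − δ(ε)` any global minimizer is `C²([ε,1])`, solves the modified equilibrium
equation on `(ε,1)`, has positive strain, `r_ε(ε) > 0`, and `T̂(r_ε(ε)) = 0`. -/
theorem stmt18 (n : ℕ) (hn : 2 ≤ n) (κ : ℝ) (hκ : 0 < κ)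
    (h h' h'' : ℝ → ℝ) (hh : GoodH h h' h'') (hconv : ConvexOn ℝ (Set.Ioi 0) h)
    (K γ₀ : ℝ) (hK : 0 < K) (hγ₀ : 0 < γ₀)
    (hctrl : ∀ d : ℝ, 0 < d → ∀ c : ℝ, |c - 1| ≤ γ₀ → |d * h' (c * d)| ≤ K * (h d + 1))
    (huniq : ∀ t : ℝ, 0 < t → (PhiHat1 n κ h' t t = 0 ↔ t = 1))
    (ε : ℝ) (hε : ε ∈ Set.Ioo (0:ℝ) 1) :
    (∀ lam : ℝ, 0 < lam →
      ∃ re re' : ℝ → ℝ, AdmE ε lam re re' ∧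
        (∀ s s' : ℝ → ℝ, AdmE ε lam s s' →
          IHatEps n κ ε lam h re re' ≤ IHatEps n κ ε lam h s s') ∧
        (∀ s s' : ℝ → ℝ, AdmE ε lam s s' →
          (∀ t t' : ℝ → ℝ, AdmE ε lam t t' →
            IHatEps n κ ε lam h s s' ≤ IHatEps n κ ε lam h t t') →
          ∀ R ∈ Set.Icc ε 1, s R = re R)) ∧
    (∃ dlt : ℝ, 0 < dlt ∧ ∀ lam : ℝ, 1 - dlt < lam →
      ∀ re re' : ℝ → ℝ, AdmE ε lam re re' →
        (∀ s s' : ℝ → ℝ, AdmE ε lam s s' →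
          IHatEps n κ ε lam h re re' ≤ IHatEps n κ ε lam h s s') →
        ∃ ρ ρ' : ℝ → ℝ,
          (∀ R ∈ Set.Icc ε 1, HasDerivWithinAt re (ρ R) (Set.Icc ε 1) R) ∧
          (∀ R ∈ Set.Icc ε 1, HasDerivWithinAt ρ (ρ' R) (Set.Icc ε 1) R) ∧
          ContinuousOn ρ' (Set.Icc ε 1) ∧
          (∀ R ∈ Set.Ioo ε 1,
            HasDerivAt (fun s => s ^ (n - 1) * PhiHat1 n κ h' (ρ s) (re s / s))
              (((n:ℝ) - 1) * R ^ (n - 2) * PhiHat2 n κ h' (ρ R) (re R / R)) R) ∧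
          (∀ R ∈ Set.Icc ε 1, 0 < ρ R) ∧
          0 < re ε ∧
          THat n κ h' (ρ ε) (re ε / ε) = 0) := by
  obtain ⟨hmin, hreg⟩ := stmt18_general n hn κ hκ h h' h'' hh ε hε
  exact ⟨hmin, 1, one_pos, fun lam _ => hreg lam⟩

end
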